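/- For every integer n ≥ 1, every r ∈ [0, π/2) and every η ∈ (0, π), the Green function of the conformal sub-Laplacian −L + 4n(n+1) on S^{4n+3} is given by ∫_0^∞ p_t(r, η)·e^{−4n(n+1)t} dt = Γ(n)·Γ(n+1) / (8π^{2n+2}·(1 − 2·cos r·cos η + cos²r)^{n+1}). -/

import Mathlib

open Real MeasureTheory Filter Topology Set

noncomputable section

/-- The defining formula of the Jacobi polynomial `P_k^{(α,β)}` on `(-1,1)`. -/
def jacobiFormula (k α β : ℕ) (x : ℝ) : ℝ :=
  ((-1 : ℝ) ^ k / (2 ^ k * Nat.factorial k)) * (1 - x) ^ (-(α : ℤ)) * (1 + x) ^ (-(β : ℤ)) *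
    iteratedDeriv k (fun y => (1 - y) ^ (α + k) * (1 + y) ^ (β + k)) x

/-- `J k α β` is the Jacobi polynomial `P_k^{(α,β)}`: a polynomial function satisfying the
defining formula on `(-1,1)`. -/
def IsJacobi (J : ℕ → ℕ → ℕ → ℝ → ℝ) : Prop :=
  ∀ k α β : ℕ, (∃ p : Polynomial ℝ, ∀ x : ℝ, J k α β x = p.eval x) ∧
    ∀ x ∈ Set.Ioo (-1 : ℝ) 1, J k α β x = jacobiFormula k α β x

/-- The vertical factor `sin((m+1)η)/sin η`, extended by its limit `m+1` at `η = 0`. -/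
def vertFactor (m : ℕ) (η : ℝ) : ℝ :=
  if η = 0 then (m + 1 : ℝ) else Real.sin ((m + 1) * η) / Real.sin η

/-- The general term of the double series defining the subelliptic heat kernel of the
quaternionic Hopf fibration on `S^{4n+3}`. -/
def pTerm (n : ℕ) (J : ℕ → ℕ → ℕ → ℝ → ℝ) (t r η : ℝ) (mk : ℕ × ℕ) : ℝ :=
  (Real.Gamma (2 * n) / (2 * Real.pi ^ (2 * n + 2))) *
    (2 * (mk.2 : ℝ) + mk.1 + 2 * n + 1) * ((mk.1 : ℝ) + 1) *
    (Nat.choose (mk.2 + mk.1 + 2 * n) (2 * n - 1) : ℝ) *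
    Real.exp (-(4 * ((mk.2 : ℝ) * (mk.2 + 2 * n + mk.1 + 1) + n * mk.1)) * t) *
    vertFactor mk.1 η * Real.cos r ^ mk.1 * J mk.2 (2 * n - 1) (mk.1 + 1) (Real.cos (2 * r))

/-- The subelliptic heat kernel of the quaternionic Hopf fibration on `S^{4n+3}`. -/
def pKernel (n : ℕ) (J : ℕ → ℕ → ℕ → ℝ → ℝ) (t r η : ℝ) : ℝ :=
  ∑' mk : ℕ × ℕ, pTerm n J t r η mk

/-- The defining formula of the Gegenbauer polynomial `C_m^{2n+1}` on `(-1,1)`. -/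
def gegenbauerFormula (n m : ℕ) (x : ℝ) : ℝ :=
  ((-1 : ℝ) ^ m / 2 ^ m) *
    (Real.Gamma ((m : ℝ) + 4 * n + 2) * Real.Gamma (2 * (n : ℝ) + 3 / 2) /
      (Real.Gamma (4 * (n : ℝ) + 2) * Real.Gamma ((m : ℝ) + 1) *
        Real.Gamma (2 * (n : ℝ) + m + 3 / 2))) *
    (1 - x ^ 2) ^ (-(2 * (n : ℝ) + 1 / 2)) *
    iteratedDeriv m (fun y => (1 - y ^ 2) ^ (2 * (n : ℝ) + m + 1 / 2)) x

/-- `C m` is the Gegenbauer polynomial `C_m^{2n+1}`. -/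
def IsGegenbauer (n : ℕ) (C : ℕ → ℝ → ℝ) : Prop :=
  ∀ m : ℕ, (∃ p : Polynomial ℝ, ∀ x : ℝ, C m x = p.eval x) ∧
    ∀ x ∈ Set.Ioo (-1 : ℝ) 1, C m x = gegenbauerFormula n m x

/-- The Riemannian heat kernel of `S^{4n+3}`. -/
def qKernel (n : ℕ) (C : ℕ → ℝ → ℝ) (t x : ℝ) : ℝ :=
  (Real.Gamma (2 * n + 1) / (2 * Real.pi ^ (2 * n + 2))) *
    ∑' m : ℕ, ((m : ℝ) + 2 * n + 1) * Real.exp (-((m : ℝ) * (m + 4 * n + 2)) * t) * C m x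

/-- The general term of the double series defining the subelliptic heat kernel on `CP^{2n+1}`. -/
def hTerm (n : ℕ) (J : ℕ → ℕ → ℕ → ℝ → ℝ) (t r φ : ℝ) (mk : ℕ × ℕ) : ℝ :=
  (Real.Gamma (2 * n) / (4 * Real.pi ^ (2 * n + 2))) *
    (2 * (mk.2 : ℝ) + 2 * mk.1 + 2 * n + 1) * (2 * (mk.1 : ℝ) + 1) *
    (Nat.choose (mk.2 + 2 * mk.1 + 2 * n) (2 * n - 1) : ℝ) *
    Real.exp (-(4 * (mk.2 : ℝ) * (mk.2 + 2 * n + 2 * mk.1 + 1) + 8 * n * mk.1) * t) *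
    Real.cos r ^ (2 * mk.1) * J mk.1 0 0 (Real.cos (2 * φ)) *
    J mk.2 (2 * n - 1) (2 * mk.1 + 1) (Real.cos (2 * r))

/-- The subelliptic heat kernel of the fibration `CP^1 → CP^{2n+1} → HP^n`. -/
def hKernel (n : ℕ) (J : ℕ → ℕ → ℕ → ℝ → ℝ) (t r φ : ℝ) : ℝ :=
  ∑' mk : ℕ × ℕ, hTerm n J t r φ mk

end


noncomputable section

/-- unnormalized Jacobi polynomial in the variable `(1+x)/2` -/
def gQ : ℕ → ℕ → ℕ → Polynomial ℝ
  | 0, _, _ => 1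
  | k+1, α, β => Polynomial.X * (1 - Polynomial.X) * Polynomial.derivative (gQ k (α+1) (β+1))
      + (Polynomial.C ((β:ℝ)+1) - Polynomial.C ((α:ℝ)+β+2) * Polynomial.X) * gQ k (α+1) (β+1)

lemma gQ_deriv (k : ℕ) : ∀ α β : ℕ, iteratedDeriv k (fun y : ℝ => (1 - y) ^ (α + k) * (1 + y) ^ (β + k))
    = fun x => (1-x)^α * (1+x)^β * 2^k * (gQ k α β).eval ((1+x)/2) := by
  induction k with
  | zero => intro α β; simp [gQ]
  | succ k ih =>
    intro α β
    rw [iteratedDeriv_succ]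
    have := ih (α+1) (β+1)
    have e : (fun y : ℝ => (1 - y) ^ (α + (k+1)) * (1 + y) ^ (β + (k+1))) =
      (fun y : ℝ => (1 - y) ^ (α + 1 + k) * (1 + y) ^ (β + 1 + k)) := by
      funext y; congr 2 <;> ring
    rw [e, this]
    funext x
    have h1 : HasDerivAt (fun x : ℝ => (1-x)^(α+1)) (((α+1:ℕ):ℝ) * (1-x)^α * (-1)) x := by
      have := ((hasDerivAt_id x).const_sub 1).pow (α+1)
      refine HasDerivAt.congr_deriv (f := fun x : ℝ => (1-x)^(α+1)) this ?_
      simp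
    have h2 : HasDerivAt (fun x : ℝ => (1+x)^(β+1)) (((β+1:ℕ):ℝ) * (1+x)^β * (1)) x := by
      have := ((hasDerivAt_id x).const_add 1).pow (β+1)
      refine HasDerivAt.congr_deriv (f := fun x : ℝ => (1+x)^(β+1)) this ?_
      simp
    have h3 : HasDerivAt (fun x : ℝ => (gQ k (α+1) (β+1)).eval ((1+x)/2))
       ((Polynomial.derivative (gQ k (α+1) (β+1))).eval ((1+x)/2) * (1/2)) x := by
      have h := (((hasDerivAt_id x).const_add 1).div_const 2)
      exact HasDerivAt.comp x ((gQ k (α+1) (β+1)).hasDerivAt ((1+x)/2)) h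
    have := (((h1.mul h2).mul_const (2^k)).mul h3).deriv
    refine Eq.trans this ?_
    simp only [gQ, Polynomial.eval_add, Polynomial.eval_mul, Polynomial.eval_sub, Polynomial.eval_C,
      Polynomial.eval_X, Polynomial.eval_one]
    push_cast
    simp only [Pi.mul_apply]
    ring

lemma gQ_coeff (k : ℕ) : ∀ α β i : ℕ, (gQ k α β).coeff i =
    (-1)^i * (k.choose i : ℝ) * ((k+α+β+i).factorial / (k+α+β).factorial) *
      ((β+k).factorial / (β+i).factorial) := by
  induction k with
  | zero =>
    intro α β i
    rcases i with _ | i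
    · simp [gQ]
      field_simp
    · simp [gQ, Polynomial.coeff_one]
  | succ k ih =>
    intro α β i
    have e : gQ (k+1) α β = Polynomial.derivative (gQ k (α+1) (β+1)) * Polynomial.X
       - Polynomial.derivative (gQ k (α+1) (β+1)) * Polynomial.X * Polynomial.X
       + (Polynomial.C ((β:ℝ)+1) * gQ k (α+1) (β+1) - Polynomial.C ((α:ℝ)+β+2) * (gQ k (α+1) (β+1) * Polynomial.X)) := by
      rw [gQ]; ring
    rw [e]
    rcases i with _ | i
    · simp [ih]
      have h1 : ((β+(k+1)).factorial:ℝ) = (β+1+k).factorial := by congr 2; ring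
      rw [h1, Nat.factorial_succ β]
      have h2 : (β.factorial:ℝ) ≠ 0 := by positivity
      have h3 : (((k + (α + 1) + (β + 1)).factorial):ℝ) ≠ 0 := by positivity
      have h4 : (((k + 1 + α + β).factorial):ℝ) ≠ 0 := by positivity
      push_cast
      field_simp
    · rcases i with _ | i
      · simp only [Polynomial.coeff_add, Polynomial.coeff_sub, Polynomial.coeff_mul_X, Polynomial.mul_coeff_zero, Polynomial.coeff_X_zero, Polynomial.coeff_C_mul, Polynomial.coeff_derivative, ih]
        simp only [Nat.choose_zero_right, zero_add, Nat.choose_one_right, add_zero, mul_zero]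
        have h1 : k + (α+1)+(β+1) = k+1+α+β+1 := by ring
        have h2 : β+1+k = β+(k+1) := by ring
        rw [h1,h2, Nat.factorial_succ (k+1+α+β+1),  Nat.factorial_succ (k+1+α+β), Nat.factorial_succ (β+1), Nat.factorial_succ β]
        have h2 : (β.factorial:ℝ) ≠ 0 := by positivity
        have h3 : (((k + 1 + α + β).factorial):ℝ) ≠ 0 := by positivity
        push_cast
        field_simp
        ring
      · simp only [Polynomial.coeff_add, Polynomial.coeff_sub, Polynomial.coeff_mul_X, Polynomial.coeff_C_mul, Polynomial.coeff_derivative, ih]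
        have h1 : k + (α+1)+(β+1) = k+1+α+β+1 := by ring
        have h2 : β+1+k = β+(k+1) := by ring
        have h3 : k+1+α+β+1+(i+1+1) = k+1+α+β+1+i+1+1 := by ring
        have h4 : k+1+α+β+1+(i+1) = k+1+α+β+1+i+1 := by ring
        have h5 : k+1+α+β+(i+1+1) = k+1+α+β+1+i+1 := by ring
        have h6 : β+1+(i+1+1) = β+i+1+1+1 := by ring
        have h7 : β+(i+1+1) = β+i+1+1 := by ring
        have h8 : β+1+(i+1) = β+i+1+1 := by ring
        rw [h1,h2,h3,h4,h5,h6,h7,h8, Nat.factorial_succ (k+1+α+β+1+i+1), Nat.factorial_succ (k+1+α+β),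
          Nat.factorial_succ (β+i+1+1), Nat.choose_succ_succ k (i+1)]
        have g1 : ((β+i+1+1).factorial:ℝ) ≠ 0 := by positivity
        have g2 : (((k + 1 + α + β).factorial):ℝ) ≠ 0 := by positivity
        have g3 : ((k.choose (i+1+1) : ℕ):ℝ) * ((i:ℝ)+2) = (k.choose (i+1):ℕ) * ((k:ℝ) - (i+1)) := by
          rcases le_or_gt (i+1) k with h | h
          · have := Nat.choose_succ_right_eq k (i+1)
            have := congrArg (Nat.cast (R := ℝ)) this
            push_cast [Nat.cast_sub h] at this
            linarith
          · rw [Nat.choose_eq_zero_of_lt h, Nat.choose_eq_zero_of_lt (by omega)]; simp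
        push_cast
        field_simp
        ring_nf at g3 ⊢
        linear_combination (-1)^i * ((β:ℝ)+i+3) * g3

/-- normalized -/
def jacP (k α β : ℕ) (ρ : ℝ) : ℝ := (-1)^k / k.factorial * (gQ k α β).eval ρ

lemma gQ_natDegree (k α β : ℕ) : (gQ k α β).natDegree ≤ k := by
  rw [Polynomial.natDegree_le_iff_coeff_eq_zero]
  intro i hi
  rw [gQ_coeff, Nat.choose_eq_zero_of_lt hi]; simp

end
noncomputable section

lemma J_eq {J : ℕ → ℕ → ℕ → ℝ → ℝ} (hJ : IsJacobi J) (k α β : ℕ) (ρ : ℝ) :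
    J k α β (2*ρ-1) = jacP k α β ρ := by
  obtain ⟨⟨p, hp⟩, h⟩ := hJ k α β
  have key : p = Polynomial.C ((-1)^k / k.factorial : ℝ) * (gQ k α β).comp (Polynomial.C (1/2) * (1 + Polynomial.X)) := by
    apply Polynomial.eq_of_infinite_eval_eq
    apply Set.Infinite.mono _ (Set.Ioo_infinite (show (-1:ℝ) < 1 by norm_num))
    intro x hx
    simp only [Set.mem_ofPred_eq]
    rw [← hp, h x hx, jacobiFormula, gQ_deriv]
    simp only [Polynomial.eval_mul, Polynomial.eval_C, Polynomial.eval_comp, Polynomial.eval_add, Polynomial.eval_one, Polynomial.eval_X]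
    have h1 : (1 - x) ≠ 0 := by have := hx.2; linarith
    have h2 : (1 + x) ≠ 0 := by have := hx.1; linarith
    have e : 1/2*(1+x) = (1+x)/2 := by ring
    rw [e, zpow_neg, zpow_neg, zpow_natCast, zpow_natCast]
    field_simp
  rw [hp, key, jacP]
  simp only [Polynomial.eval_mul, Polynomial.eval_C, Polynomial.eval_comp, Polynomial.eval_add, Polynomial.eval_one, Polynomial.eval_X]
  congr 2; ring

def cc (α β i k : ℕ) : ℝ := (2*k+α+β+1) * (i.descFactorial k) * ((k+α+β).factorial * (i+β).factorial /
  ((k+β).factorial * (i+k+α+β+1).factorial))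

lemma cc_nonneg (α β i k : ℕ) : 0 ≤ cc α β i k := by unfold cc; positivity

lemma tele (g d : ℕ) (hd : 1 ≤ d) : ∀ J e : ℕ, J + e = d →
    ∑ j ∈ Finset.range J, (-1:ℝ)^j * (g+2*j+1) * (g+j).factorial / ((d-j).factorial * j.factorial * (g+d+j+1).factorial)
     = -(-1)^J * (g+J).factorial * J / (d * e.factorial * J.factorial * (g+d+J).factorial) := by
  intro J
  induction J with
  | zero => intro e he; simp
  | succ J ih =>
    intro e he
    rw [Finset.sum_range_succ, ih (e+1) (by omega)]
    have : d - J = e+1 := by omega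
    rw [this]
    have hd' : (d:ℝ) = J + e + 1 := by rw [← he]; push_cast; ring
    have hd0 : (d:ℝ) ≠ 0 := by positivity
    have e1 : g + d + (J+1) = g+d+J+1 := by ring
    have e2 : g + (J+1) = g+J+1 := by ring
    rw [e1, e2, Nat.factorial_succ (g+d+J), Nat.factorial_succ (g+J), Nat.factorial_succ e, Nat.factorial_succ J]
    have h1 : ((g+d+J).factorial:ℝ) ≠ 0 := by positivity
    have h2 : ((e).factorial:ℝ) ≠ 0 := by positivity
    have h3 : ((J).factorial:ℝ) ≠ 0 := by positivity
    push_cast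
    field_simp
    rw [hd']
    ring

lemma tele' (g d : ℕ)  :
    ∑ j ∈ Finset.range (d+1), (-1:ℝ)^j * (g+2*j+1) * (g+j).factorial / ((d-j).factorial * j.factorial * (g+d+j+1).factorial)
     = if d = 0 then 1 else 0 := by
  rcases Nat.eq_zero_or_pos d with h | h
  · subst h
    simp [Nat.factorial_succ]
    exact ⟨by positivity, by positivity⟩
  · rw [if_neg (by omega), Finset.sum_range_succ, tele g d h d 0 (by omega), Nat.factorial_succ (g+d+d)]
    have h1 : ((g+d+d).factorial:ℝ) ≠ 0 := by positivity
    have h3 : ((d).factorial:ℝ) ≠ 0 := by positivity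
    simp
    field_simp
    ring

lemma inv_coeff (α β i l : ℕ) : ∑ k ∈ Finset.range (i+1), cc α β i k * ((-1)^k / k.factorial * (gQ k α β).coeff l)
    = if l = i then 1 else 0 := by
  rcases le_or_gt l i with h | h
  · obtain ⟨d, rfl⟩ := Nat.exists_eq_add_of_le h
    rw [add_assoc, Finset.sum_range_add, Finset.sum_eq_zero, zero_add]
    · have key : ∀ j ∈ Finset.range (d+1), cc α β (l+d) (l+j) * ((-1)^(l+j) / (l+j).factorial * (gQ (l+j) α β).coeff l)
        = ((l+d).factorial * (l+d+β).factorial / (l.factorial * (β+l).factorial)) * ((-1:ℝ)^j * ((2*l+α+β:ℕ)+2*j+1) * ((2*l+α+β)+j).factorial / ((d-j).factorial * j.factorial * ((2*l+α+β)+d+j+1).factorial)) := by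
        intro j hj
        obtain ⟨e, he⟩ := Nat.exists_eq_add_of_le (Nat.lt_succ_iff.mp (Finset.mem_range.mp hj))
        subst he
        rw [gQ_coeff, cc]
        have h1 : (((l+(j+e)).descFactorial (l+j) : ℕ):ℝ) = (l+(j+e)).factorial / e.factorial := by
          rw [eq_div_iff (by positivity)]
          have := Nat.factorial_mul_descFactorial (show l+j ≤ l+(j+e) by omega)
          rw [show l+(j+e) - (l+j) = e by omega] at this
          exact_mod_cast (by linarith)
        have h2 : (((l+j).choose l : ℕ):ℝ) = (l+j).factorial / (l.factorial * j.factorial) := by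
          rw [eq_div_iff (by positivity)]
          have := Nat.choose_mul_factorial_mul_factorial (show l ≤ l+j by omega)
          rw [show l+j - l = j by omega] at this
          exact_mod_cast (by linarith)
        rw [h1, h2]
        have e1 : l+(j+e)+(l+j)+α+β+1 = 2*l+α+β+(j+e)+j+1 := by ring
        have e2 : l+j+α+β+l = 2*l+α+β+j := by ring
        have e3 : j+e-j = e := by omega
        have e4 : β+(l+j) = l+j+β := by ring
        rw [e1, e2, e3, e4]
        have e5 : ((-1:ℝ))^(l+j) * (-1)^l = (-1)^j := by
          rw [pow_add, mul_right_comm, ← mul_pow]; simp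
        have q1 : ((l+j).factorial:ℝ) ≠ 0 := by positivity
        have q2 : ((l+j+β).factorial:ℝ) ≠ 0 := by positivity
        have q3 : ((l+j+α+β).factorial:ℝ) ≠ 0 := by positivity
        rw [← e5]
        push_cast
        field_simp
        ring
      rw [Finset.sum_congr rfl key, ← Finset.mul_sum, tele']
      rcases Nat.eq_zero_or_pos d with h | h
      · subst h
        simp only [add_zero, if_true, mul_one]
        rw [add_comm β l, div_self (by positivity)]
      · rw [if_neg (by omega), if_neg (by omega)]; simp
    · intro k hk
      rw [gQ_coeff, Nat.choose_eq_zero_of_lt (Finset.mem_range.mp hk)]; simp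
  · rw [if_neg (by omega), Finset.sum_eq_zero]
    intro k hk
    rw [gQ_coeff, Nat.choose_eq_zero_of_lt (by have := Finset.mem_range.mp hk; omega)]; simp

def jpoly (k α β : ℕ) : Polynomial ℝ := Polynomial.C ((-1:ℝ)^k / (k.factorial:ℝ)) * gQ k α β

lemma jacP_eq (k α β : ℕ) (ρ : ℝ) : jacP k α β ρ = (jpoly k α β).eval ρ := by
  simp [jacP, jpoly]

lemma inv_poly (α β i : ℕ) : ∑ k ∈ Finset.range (i+1), Polynomial.C (cc α β i k) * jpoly k α β = Polynomial.X ^ i := by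
  ext l
  rw [Polynomial.finsetSum_coeff, Polynomial.coeff_X_pow, ← inv_coeff α β i l]
  apply Finset.sum_congr rfl
  intro k _
  rw [jpoly, Polynomial.coeff_C_mul, Polynomial.coeff_C_mul]

end
noncomputable section

abbrev MP2 := MvPolynomial (Fin 2) ℝ

def ev (p : MP2) (x ρ : ℝ) : ℝ := MvPolynomial.eval ![x, ρ] p

abbrev D0 (p : MP2) : MP2 := MvPolynomial.pderiv 0 p
abbrev D1 (p : MP2) : MP2 := MvPolynomial.pderiv 1 p

def vx : MP2 := MvPolynomial.X 0
def vr : MP2 := MvPolynomial.X 1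

def Lap (p : MP2) : MP2 := D0 (D0 p) + 4 * vx * D1 (D0 p) + 4 * vr * D1 (D1 p) + 8 * D1 p
def Eu (p : MP2) : MP2 := vx * D0 p + 2 * vr * D1 p
def Lop (n : ℕ) (p : MP2) : MP2 := (1 - vr) * Lap p - 4 * (n : MP2) * Eu p

lemma D01_comm (p : MP2) : D0 (D1 p) = D1 (D0 p) := by
  have h : ⁅(MvPolynomial.pderiv 0 : Derivation ℝ MP2 MP2), (MvPolynomial.pderiv 1 : Derivation ℝ MP2 MP2)⁆ = 0 := by
    apply MvPolynomial.derivation_ext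
    intro i
    fin_cases i <;> simp [Derivation.commutator_apply, MvPolynomial.pderiv_X]
  have h2 := congrArg (fun d : Derivation ℝ MP2 MP2 => d p) h
  simp only [Derivation.commutator_apply, Derivation.coe_zero, Pi.zero_apply] at h2
  exact sub_eq_zero.1 h2

@[simp] lemma ev_vx (x ρ) : ev vx x ρ = x := by simp [ev, vx]
@[simp] lemma ev_vr (x ρ) : ev vr x ρ = ρ := by simp [ev, vr]
@[simp] lemma ev_add (p q x ρ) : ev (p+q) x ρ = ev p x ρ + ev q x ρ := by simp [ev]
@[simp] lemma ev_sub (p q x ρ) : ev (p-q) x ρ = ev p x ρ - ev q x ρ := by simp [ev]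
@[simp] lemma ev_mul (p q x ρ) : ev (p*q) x ρ = ev p x ρ * ev q x ρ := by simp [ev]
@[simp] lemma ev_one (x ρ) : ev 1 x ρ = 1 := by simp [ev]
@[simp] lemma ev_C (a x ρ) : ev (MvPolynomial.C a) x ρ = a := by simp [ev]
@[simp] lemma ev_nat (a : ℕ) (x ρ) : ev (a : MP2) x ρ = a := by simp [ev]
@[simp] lemma ev_two (x ρ) : ev 2 x ρ = 2 := by simp [ev]
@[simp] lemma ev_four (x ρ) : ev 4 x ρ = 4 := by simp [ev]
@[simp] lemma ev_eight (x ρ) : ev 8 x ρ = 8 := by simp [ev]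

lemma D0_vx : D0 vx = 1 := by simp [D0, vx]
lemma D1_vx : D1 vx = 0 := by simp [D1, vx, MvPolynomial.pderiv_X]
lemma D0_vr : D0 vr = 0 := by simp [D0, vr, MvPolynomial.pderiv_X]
lemma D1_vr : D1 vr = 1 := by simp [D1, vr]

lemma ev_deriv (p : MP2) (a b : ℝ → ℝ) (a' b' s : ℝ) (ha : HasDerivAt a a' s) (hb : HasDerivAt b b' s) :
    HasDerivAt (fun s => ev p (a s) (b s)) (a' * ev (D0 p) (a s) (b s) + b' * ev (D1 p) (a s) (b s)) s := by
  induction p using MvPolynomial.induction_on with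
  | C c => simpa [D0, D1, ev] using hasDerivAt_const s c
  | add p q hp hq =>
    have := hp.add hq
    simp only [ev_add, D0, D1, map_add] at *
    refine HasDerivAt.congr_deriv this ?_
    ring
  | mul_X p i hp =>
    have e0 : HasDerivAt (fun s => ev (MvPolynomial.X i) (a s) (b s)) (a' * ev (D0 (MvPolynomial.X i)) (a s) (b s) + b' * ev (D1 (MvPolynomial.X i)) (a s) (b s)) s := by
      fin_cases i
      · have h0 : D0 (MvPolynomial.X 0) = 1 := D0_vx
        have h1 : D1 (MvPolynomial.X 0) = 0 := D1_vx
        simp only [Fin.zero_eta, h0, h1]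
        simpa [ev] using ha
      · have h0 : D0 (MvPolynomial.X 1) = 0 := D0_vr
        have h1 : D1 (MvPolynomial.X 1) = 1 := D1_vr
        simp only [Fin.mk_one, h0, h1]
        simpa [ev] using hb
    have := hp.mul e0
    simp only [ev_mul, D0, D1, Derivation.leibniz, ev_add, smul_eq_mul] at *
    refine HasDerivAt.congr_deriv this ?_
    ring

lemma second_test (g g' : ℝ → ℝ) (c : ℝ) (h1 : ∀ s, HasDerivAt g (g' s) s) (h2 : HasDerivAt g' c 0)
    (hm : ∀ᶠ s in 𝓝 0, g 0 ≤ g s) : 0 ≤ c := by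
  by_contra hc
  push Not at hc
  have hmin : IsLocalMin g 0 := hm
  have hd : deriv g = g' := funext fun s => (h1 s).deriv
  have hmax : IsLocalMax g 0 := by
    apply isLocalMax_of_deriv_deriv_neg
    · rw [hd, h2.deriv]; exact hc
    · exact hmin.deriv_eq_zero
    · exact (h1 0).continuousAt
  have heq : g =ᶠ[𝓝 0] fun _ => g 0 := by
    filter_upwards [hmin, hmax] with s a b
    exact le_antisymm b a
  have h3 : g' =ᶠ[𝓝 0] fun _ => 0 := by
    have := heq.deriv
    rw [hd] at this
    simpa using this
  have h4 := h3.deriv_eq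
  rw [h2.deriv] at h4
  simp at h4
  linarith

def Om : Set (ℝ × ℝ) := {y | y.1^2 ≤ y.2 ∧ y.2 ≤ 1}

lemma Om_compact : IsCompact Om := by
  apply Metric.isCompact_of_isClosed_isBounded
  · apply IsClosed.inter
    · exact isClosed_le (f := fun y : ℝ × ℝ => y.1^2) (g := fun y => y.2) (by fun_prop) (by fun_prop)
    · exact isClosed_le (f := fun y : ℝ × ℝ => y.2) (g := fun y => 1) (by fun_prop) (by fun_prop)
  · apply (Metric.isBounded_Icc ((-1,0):ℝ×ℝ) (1,1)).subset
    rintro ⟨x, ρ⟩ ⟨h1, h2⟩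
    simp only at h1 h2
    refine ⟨⟨?_, ?_⟩, ⟨?_, ?_⟩⟩ <;> simp only <;> nlinarith [sq_nonneg x]

lemma curve2 (p : MP2) (x ρ u v w : ℝ)
    (hm : ∀ᶠ s in 𝓝 (0:ℝ), ev p x ρ ≤ ev p (x + u * s) (ρ + v * s + w * s^2)) :
    0 ≤ u^2 * ev (D0 (D0 p)) x ρ + 2 * u * v * ev (D1 (D0 p)) x ρ + v^2 * ev (D1 (D1 p)) x ρ + 2 * w * ev (D1 p) x ρ := by
  have ha : ∀ s, HasDerivAt (fun s => x + u*s) u s := fun s => by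
    simpa using ((hasDerivAt_id s).const_mul u).const_add x
  have hb : ∀ s, HasDerivAt (fun s => ρ + v * s + w * s^2) (v + 2*w*s) s := fun s => by
    have := (((hasDerivAt_id s).const_mul v).const_add ρ).add ((hasDerivAt_pow 2 s).const_mul w)
    refine HasDerivAt.congr_deriv (f := fun s => ρ + v * s + w * s^2) this ?_
    simp; ring
  have hb' : HasDerivAt (fun s => v + 2*w*s) (2*w) 0 := by
    simpa using ((hasDerivAt_id (0:ℝ)).const_mul (2*w)).const_add v
  have := second_test (fun s => ev p (x + u * s) (ρ + v * s + w * s^2)) _ _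
    (fun s => ev_deriv p _ _ _ _ s (ha s) (hb s))
    (((ev_deriv (D0 p) _ _ _ _ 0 (ha 0) (hb 0)).const_mul u).add (hb'.mul (ev_deriv (D1 p) _ _ _ _ 0 (ha 0) (hb 0))))
    (by simpa using hm)
  simp [-ev_mul] at this
  have e : ev (D0 (D1 p)) x ρ = ev (D1 (D0 p)) x ρ := by rw [D01_comm]
  simp only [D0, D1] at *
  rw [e] at this
  refine this.trans_eq ?_
  ring

lemma min_L (n : ℕ) (p : MP2) (x ρ : ℝ) (h : (x,ρ) ∈ Om) (hmin : ∀ y ∈ Om, ev p x ρ ≤ ev p y.1 y.2) :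
    0 ≤ ev (Lop n p) x ρ := by
  obtain ⟨h1, h2⟩ := h
  simp only at h1 h2
  have hrho : 0 ≤ ρ := (sq_nonneg x).trans h1
  -- scaling curve
  have hE : HasDerivAt (fun s : ℝ => ev p ((1-s)*x) ((1-s)^2*ρ)) (- ev (Eu p) x ρ) 0 := by
    have ha : HasDerivAt (fun s : ℝ => (1-s)*x) (-x) 0 := by
      simpa using ((hasDerivAt_id (0:ℝ)).const_sub 1).mul_const x
    have hb : HasDerivAt (fun s : ℝ => (1-s)^2*ρ) (-2*ρ) 0 := by
      have := (((hasDerivAt_id (0:ℝ)).const_sub 1).pow 2).mul_const ρ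
      refine HasDerivAt.congr_deriv (f := fun s : ℝ => (1-s)^2*ρ) this ?_
      simp
    refine (ev_deriv p _ _ _ _ 0 ha hb).congr_deriv ?_
    simp [Eu]
    ring
  rcases h2.lt_or_eq with h2 | h2
  · have cont : ∀ v w : ℝ, ∀ᶠ s in 𝓝 (0:ℝ), ρ + v * s + w * s^2 < 1 := by
      intro v w
      have : Tendsto (fun s : ℝ => ρ + v * s + w * s^2) (𝓝 0) (𝓝 (ρ + v * 0 + w * 0^2)) := by
        apply Continuous.tendsto; fun_prop
      apply this.eventually_lt_const
      simpa using h2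
    have c1 := curve2 p x ρ 1 (2*x) 1 (by
      filter_upwards [cont (2*x) 1] with s hs
      refine hmin (_, _) ⟨?_, hs.le⟩
      simp only
      nlinarith)
    have hy := Real.sq_sqrt (sub_nonneg.2 h1)
    have c2 := curve2 p x ρ 0 (2*√(ρ - x^2)) 1 (by
      filter_upwards [cont (2*√(ρ-x^2)) 1] with s hs
      refine hmin (_, _) ⟨?_, hs.le⟩
      simp only
      nlinarith [sq_nonneg (√(ρ-x^2) + s)])
    have c3 := curve2 p x ρ 0 0 1 (by
      filter_upwards [cont 0 1] with s hs
      refine hmin (_, _) ⟨?_, hs.le⟩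
      simp only
      nlinarith [sq_nonneg s])
    have hE0 : - ev (Eu p) x ρ = 0 := by
      have : IsLocalMin (fun s : ℝ => ev p ((1-s)*x) ((1-s)^2*ρ)) 0 := by
        have hc : ∀ᶠ s in 𝓝 (0:ℝ), (1-s)^2*ρ < 1 := by
          have : Tendsto (fun s : ℝ => (1-s)^2*ρ) (𝓝 0) (𝓝 ((1-0)^2*ρ)) := by
            apply Continuous.tendsto; fun_prop
          apply this.eventually_lt_const
          simpa using h2
        filter_upwards [hc] with s hs
        simp only [sub_zero, one_mul, one_pow]
        refine hmin (_, _) ⟨?_, hs.le⟩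
        simp only
        nlinarith [sq_nonneg (1-s)]
      rw [← hE.deriv]; exact this.deriv_eq_zero
    have hlap : 0 ≤ ev (Lap p) x ρ := by
      simp only [Lap, ev_add, ev_mul, ev_two, ev_four, ev_eight, ev_vx, ev_vr]
      have : 4 * ρ * ev (D1 (D1 p)) x ρ = (2*x)^2 * ev (D1 (D1 p)) x ρ + (2*√(ρ - x^2))^2 * ev (D1 (D1 p)) x ρ := by
        rw [mul_pow 2 (√(ρ-x^2)), hy]; ring
      rw [this]
      linarith
    simp only [Lop, ev_sub, ev_mul, ev_one, ev_vr, ev_two, ev_four, ev_eight, ev_nat]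
    rw [neg_eq_zero.1 hE0]
    have := mul_nonneg (sub_nonneg.2 h2.le) hlap
    linarith
  · simp only [Lop, ev_sub, ev_mul, ev_one, ev_vr, ev_two, ev_four, ev_eight, ev_nat, h2]
    subst h2
    have key : 0 ≤ - ev (Eu p) x 1 := by
      have h5 := hE.tendsto_slope_zero_right
      apply ge_of_tendsto h5
      filter_upwards [Ioo_mem_nhdsGT (show (0:ℝ) < 1 by norm_num)] with s hs
      have : ev p x 1 ≤ ev p ((1-s)*x) ((1-s)^2*1) := by
        refine hmin (_, _) ⟨?_, ?_⟩
        · simp only; nlinarith [sq_nonneg (1-s)]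
        · simp only; nlinarith [hs.1, hs.2]
      simp only [zero_add, sub_zero, one_mul, one_pow, smul_eq_mul]
      exact mul_nonneg (inv_nonneg.2 hs.1.le) (sub_nonneg.2 this)
    have : 0 ≤ (n:ℝ) * (- ev (Eu p) x 1) := by positivity
    linarith

end
noncomputable section

lemma Lop_add (n : ℕ) (p q : MP2) : Lop n (p+q) = Lop n p + Lop n q := by
  simp only [Lop, Lap, Eu, D0, D1, map_add]; ring

lemma Lop_C_mul (n : ℕ) (a : ℝ) (q : MP2) : Lop n (MvPolynomial.C a * q) = MvPolynomial.C a * Lop n q := by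
  have h0 : ∀ f : MP2, D0 (MvPolynomial.C a * f) = MvPolynomial.C a * D0 f := fun f => by
    simp [D0, Derivation.leibniz]
  have h1 : ∀ f : MP2, D1 (MvPolynomial.C a * f) = MvPolynomial.C a * D1 f := fun f => by
    simp [D1, Derivation.leibniz]
  simp only [Lop, Lap, Eu, h0, h1]; ring

lemma Lop_C (n : ℕ) (a : ℝ) : Lop n (MvPolynomial.C a) = 0 := by
  simp [Lop, Lap, Eu, D0, D1]

lemma Lop_sum (n : ℕ) {ι : Type*} (s : Finset ι) (f : ι → MP2) : Lop n (∑ j ∈ s, f j) = ∑ j ∈ s, Lop n (f j) := by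
  classical
  induction s using Finset.induction_on with
  | empty => simpa using Lop_C n 0
  | insert a s ha ih => rw [Finset.sum_insert ha, Finset.sum_insert ha, Lop_add, ih]

lemma ev_sum {ι : Type*} (s : Finset ι) (f : ι → MP2) (x ρ : ℝ) : ev (∑ j ∈ s, f j) x ρ = ∑ j ∈ s, ev (f j) x ρ := by
  simp [ev]

lemma ev_cont (p : MP2) : Continuous (fun y : ℝ × ℝ => ev p y.1 y.2) := by
  have h : Continuous (fun y : ℝ × ℝ => (![y.1, y.2] : Fin 2 → ℝ)) := by
    apply continuous_pi
    intro i
    fin_cases i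
    · exact continuous_fst
    · exact continuous_snd
  exact (MvPolynomial.continuous_eval p).comp h

lemma par_max (n : ℕ) {ι : Type*} (s : Finset ι) (a l : ι → ℝ) (φ : ι → MP2) (c : ℝ) (hc : 0 ≤ c)
    (h : ∀ j ∈ s, Lop n (φ j) = MvPolynomial.C (c - l j) * φ j) (δ : ℝ) (hδ : 0 ≤ δ)
    (h0 : ∀ y ∈ Om, -δ ≤ ∑ j ∈ s, a j * ev (φ j) y.1 y.2) (t : ℝ) (ht : 0 ≤ t) :
    ∀ y ∈ Om, -δ ≤ ∑ j ∈ s, a j * Real.exp (-l j * t) * ev (φ j) y.1 y.2 := by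
  intro y1 hy1
  by_contra hcon
  push Not at hcon
  set u : ℝ × (ℝ × ℝ) → ℝ := fun z => ∑ j ∈ s, a j * Real.exp (-l j * z.1) * ev (φ j) z.2.1 z.2.2 with hu
  obtain ⟨κ, hκ, hκ1⟩ : ∃ κ : ℝ, 0 < κ ∧ u (t, y1) + δ + κ * (1+t) < 0 := by
    have hneg : u (t,y1) + δ < 0 := by simp only [hu]; linarith
    refine ⟨-(u (t,y1) + δ)/(2*(1+t)), by apply div_pos <;> linarith, ?_⟩
    have : -(u (t,y1) + δ)/(2*(1+t)) * (1+t) = -(u (t,y1) + δ)/2 := by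
      have : (1+t) ≠ 0 := by positivity
      field_simp
    rw [this]; linarith
  have hucont : Continuous u := by
    simp only [hu]
    apply continuous_finsetSum
    intro j _
    apply Continuous.mul
    · fun_prop
    · exact (ev_cont (φ j)).comp continuous_snd
  set w : ℝ × (ℝ × ℝ) → ℝ := fun z => u z + δ + κ * (1 + z.1) with hw
  have hwcont : Continuous w := by simp only [hw]; fun_prop
  obtain ⟨⟨t0, x0, ρ0⟩, ⟨ht0, hy0⟩, hmin⟩ := (isCompact_Icc.prod Om_compact).exists_isMinOn
    (s := Set.Icc 0 t ×ˢ Om) ⟨(t, y1), ⟨⟨ht, le_refl t⟩, hy1⟩⟩ hwcont.continuousOn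
  simp only at ht0 hy0
  have hwneg : w (t0, x0, ρ0) < 0 := lt_of_le_of_lt (hmin (show (t, y1) ∈ Set.Icc 0 t ×ˢ Om from ⟨⟨ht, le_refl t⟩, hy1⟩)) hκ1
  have ht0pos : 0 < t0 := by
    rcases ht0.1.lt_or_eq with h' | h'
    · exact h'
    · exfalso
      have := h0 _ hy0
      have e : w (t0, x0, ρ0) = ∑ j ∈ s, a j * ev (φ j) x0 ρ0 + δ + κ := by
        simp only [hw, hu, ← h']; simp
      simp only at this
      linarith
  -- spatial
  set p : MP2 := ∑ j ∈ s, MvPolynomial.C (a j * Real.exp (-l j * t0)) * φ j with hp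
  have hpev : ∀ x ρ, ev p x ρ = u (t0, x, ρ) := by
    intro x ρ
    simp only [hp, ev_sum, ev_mul, ev_C, hu]
  have hL : 0 ≤ ev (Lop n p) x0 ρ0 := by
    apply min_L n p x0 ρ0 hy0
    intro y hy
    have := hmin (show (t0, y) ∈ Set.Icc 0 t ×ˢ Om from ⟨ht0, hy⟩)
    simp only [Set.mem_ofPred_eq, hw] at this
    rw [hpev, hpev]
    linarith
  have hLe : ev (Lop n p) x0 ρ0 = ∑ j ∈ s, (c - l j) * (a j * Real.exp (-l j * t0) * ev (φ j) x0 ρ0) := by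
    rw [hp, Lop_sum, ev_sum]
    apply Finset.sum_congr rfl
    intro j hj
    rw [Lop_C_mul, h j hj]
    simp only [ev_mul, ev_C]; ring
  have hder : HasDerivAt (fun τ => w (τ, x0, ρ0)) (∑ j ∈ s, (- l j) * (a j * Real.exp (-l j * t0) * ev (φ j) x0 ρ0) + κ) t0 := by
    have h1 : HasDerivAt (fun τ => u (τ, x0, ρ0)) (∑ j ∈ s, (- l j) * (a j * Real.exp (-l j * t0) * ev (φ j) x0 ρ0)) t0 := by
      simp only [hu]
      apply HasDerivAt.fun_sum
      intro j _
      have := ((((hasDerivAt_id t0).const_mul (-l j)).exp).const_mul (a j)).mul_const (ev (φ j) x0 ρ0)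
      refine HasDerivAt.congr_deriv this ?_
      simp; ring
    have h2 : HasDerivAt (fun τ => κ * (1 + τ)) κ t0 := by
      simpa using ((hasDerivAt_id t0).const_add 1).const_mul κ
    exact (h1.add_const δ).add h2
  have hdle : ∑ j ∈ s, (- l j) * (a j * Real.exp (-l j * t0) * ev (φ j) x0 ρ0) + κ ≤ 0 := by
    apply le_of_tendsto hder.tendsto_slope_zero_left
    filter_upwards [Ioo_mem_nhdsLT (show -t0 < 0 by linarith)] with r hr
    have := hmin (show (t0 + r, x0, ρ0) ∈ Set.Icc 0 t ×ˢ Om from ⟨⟨by linarith [hr.1], by linarith [hr.2, ht0.2]⟩, hy0⟩)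
    simp only [Set.mem_ofPred_eq] at this
    rw [smul_eq_mul]
    exact mul_nonpos_of_nonpos_of_nonneg (inv_nonpos.2 hr.2.le) (sub_nonneg.2 this)
  have hsplit : ∑ j ∈ s, (c - l j) * (a j * Real.exp (-l j * t0) * ev (φ j) x0 ρ0) =
     c * u (t0, x0, ρ0) + ∑ j ∈ s, (- l j) * (a j * Real.exp (-l j * t0) * ev (φ j) x0 ρ0) := by
    simp only [hu, Finset.mul_sum, ← Finset.sum_add_distrib]
    apply Finset.sum_congr rfl
    intro j _; ring
  have hun : u (t0, x0, ρ0) ≤ 0 := by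
    simp only [hw] at hwneg
    have : 0 < κ * (1+t0) := by positivity
    linarith
  have := mul_nonpos_of_nonneg_of_nonpos hc hun
  linarith

/-! harmonic polynomials -/
def V : ℕ → MP2
  | 0 => 1
  | 1 => 2 * vx
  | m+2 => 2 * vx * V (m+1) - vr * V m

abbrev Dx (p : MP2) : MP2 := D0 p + 2 * vx * D1 p

lemma D0_mul (p q) : D0 (p*q) = D0 p * q + p * D0 q := by simp [D0, Derivation.leibniz]; ring
lemma D1_mul (p q) : D1 (p*q) = D1 p * q + p * D1 q := by simp [D1, Derivation.leibniz]; ring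
lemma D0_add (p q) : D0 (p+q) = D0 p + D0 q := by simp [D0]
lemma D1_add (p q) : D1 (p+q) = D1 p + D1 q := by simp [D1]
lemma D0_sub (p q) : D0 (p-q) = D0 p - D0 q := by simp [D0]
lemma D1_sub (p q) : D1 (p-q) = D1 p - D1 q := by simp [D1]
lemma D0_zero : D0 0 = 0 := by simp [D0]
lemma D1_zero : D1 0 = 0 := by simp [D1]
lemma D0_one : D0 1 = 0 := by simp [D0]
lemma D1_one : D1 1 = 0 := by simp [D1]
lemma D0_two : D0 2 = 0 := (MvPolynomial.pderiv_C (a := (2:ℝ)) (i := (0:Fin 2)))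
lemma D1_two : D1 2 = 0 := (MvPolynomial.pderiv_C (a := (2:ℝ)) (i := (1:Fin 2)))

lemma V_facts (m : ℕ) : (Eu (V m) = (m:MP2) * V m ∧ Eu (V (m+1)) = ((m+1:ℕ):MP2) * V (m+1)) ∧
   (Dx (V (m+1)) = ((m+2:ℕ):MP2) * V m ∧ Dx (V (m+2)) = ((m+3:ℕ):MP2) * V (m+1)) ∧
   (Lap (V m) = 0 ∧ Lap (V (m+1)) = 0) := by
  induction m with
  | zero =>
    simp only [V, Eu, Dx, Lap, D0_one, D1_one, D0_mul, D1_mul, D0_vx, D1_vx, D0_vr, D1_vr, D0_two, D1_two, D0_add, D1_add, D0_sub, D1_sub, D0_zero, D1_zero]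
    push_cast
    refine ⟨⟨?_, ?_⟩, ⟨?_, ?_⟩, ⟨?_, ?_⟩⟩ <;> ring
  | succ m ih =>
    obtain ⟨⟨a1, a2⟩, ⟨b1, b2⟩, ⟨c1, c2⟩⟩ := ih
    have ea : V (m+1+1) = 2 * vx * V (m+1) - vr * V m := rfl
    have eb : V (m+1+2) = 2 * vx * V (m+2) - vr * V (m+1) := rfl
    refine ⟨⟨a2, ?_⟩, ⟨b2, ?_⟩, ⟨c2, ?_⟩⟩
    · rw [ea]
      simp only [Eu, D0_mul, D1_mul, D0_vx, D1_vx, D0_vr, D1_vr, D0_two, D1_two, D0_sub, D1_sub] at *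
      push_cast at *
      linear_combination 2 * vx * a2 - vr * a1
    · rw [eb]
      have ec : V (m+2) = 2 * vx * V (m+1) - vr * V m := rfl
      simp only [Dx, D0_mul, D1_mul, D0_vx, D1_vx, D0_vr, D1_vr, D0_two, D1_two, D0_sub, D1_sub] at *
      push_cast at *
      linear_combination 2 * vx * b2 - vr * b1 - ((m:MP2)+2) * ec
    · rw [ea]
      simp only [Dx, Eu, Lap, D0_mul, D1_mul, D0_vx, D1_vx, D0_vr, D1_vr, D0_two, D1_two, D0_sub, D1_sub, D0_add, D1_add, D0_zero, D1_zero, D0_one, D1_one, D01_comm] at *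
      push_cast at *
      linear_combination 2 * vx * c2 - vr * c1 + 4 * b1 - 4 * a1

end
noncomputable section

abbrev lf (q : Polynomial ℝ) : MP2 := Polynomial.aeval vr q

lemma D0_lf (q) : D0 (lf q) = 0 := by
  have := Derivation.comp_aeval_eq (a := vr) (MvPolynomial.pderiv 0 : Derivation ℝ MP2 MP2) q
  simp only [lf, D0, this]
  have e := D0_vr
  simp only [D0] at e
  rw [e]; simp

lemma D1_lf (q) : D1 (lf q) = lf (Polynomial.derivative q) := by
  have := Derivation.comp_aeval_eq (a := vr) (MvPolynomial.pderiv 1 : Derivation ℝ MP2 MP2) q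
  simp only [lf, D1, this]
  have e := D1_vr
  simp only [D1] at e
  rw [e]; simp

lemma gQ_ode (k α β : ℕ) : Polynomial.X * (1 - Polynomial.X) * Polynomial.derivative (Polynomial.derivative (gQ k α β))
   + (Polynomial.C ((β:ℝ)+1) - Polynomial.C ((α:ℝ)+β+2) * Polynomial.X) * Polynomial.derivative (gQ k α β)
   = - Polynomial.C ((k:ℝ) * (k+α+β+1)) * gQ k α β := by
  have step : ∀ j : ℕ, ((j:ℝ)+1) * (j+1+β) * (gQ k α β).coeff (j+1) = (j-k) * (j+k+α+β+1) * (gQ k α β).coeff j := by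
    intro j
    rw [gQ_coeff, gQ_coeff]
    have h3 : k+α+β+(j+1) = k+α+β+j+1 := by ring
    have h4 : β+(j+1) = β+j+1 := by ring
    rw [h3, h4, Nat.factorial_succ (k+α+β+j), Nat.factorial_succ (β+j)]
    have g3 : ((k.choose (j+1) : ℕ):ℝ) * ((j:ℝ)+1) = (k.choose j:ℕ) * ((k:ℝ) - j) := by
      rcases le_or_gt j k with h | h
      · have := Nat.choose_succ_right_eq k j
        have := congrArg (Nat.cast (R := ℝ)) this
        push_cast [Nat.cast_sub h] at this
        linarith
      · rw [Nat.choose_eq_zero_of_lt h, Nat.choose_eq_zero_of_lt (by omega)]; simp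
    have g1 : ((β+j).factorial:ℝ) ≠ 0 := by positivity
    have g2 : ((k+α+β).factorial:ℝ) ≠ 0 := by positivity
    have g4 : ((k+α+β+j).factorial:ℝ) ≠ 0 := by positivity
    have g5 : ((β:ℝ)+j+1) ≠ 0 := by positivity
    push_cast
    rw [pow_succ]
    field_simp
    linear_combination (-((β:ℝ)+j+1)) * (k+α+β+j+1) * g3
  have e : Polynomial.X * (1 - Polynomial.X) * Polynomial.derivative (Polynomial.derivative (gQ k α β))
   + (Polynomial.C ((β:ℝ)+1) - Polynomial.C ((α:ℝ)+β+2) * Polynomial.X) * Polynomial.derivative (gQ k α β) + Polynomial.C ((k:ℝ) * (k+α+β+1)) * gQ k α β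
    = Polynomial.derivative (Polynomial.derivative (gQ k α β)) * Polynomial.X - Polynomial.derivative (Polynomial.derivative (gQ k α β)) * Polynomial.X * Polynomial.X
     + (Polynomial.C ((β:ℝ)+1) * Polynomial.derivative (gQ k α β) - Polynomial.C ((α:ℝ)+β+2) * (Polynomial.derivative (gQ k α β) * Polynomial.X)) + Polynomial.C ((k:ℝ) * (k+α+β+1)) * gQ k α β := by ring
  rw [neg_mul, eq_neg_iff_add_eq_zero, e]
  ext j
  rcases j with _ | j
  · simp only [Polynomial.coeff_add, Polynomial.coeff_sub, Polynomial.coeff_mul_X, Polynomial.mul_coeff_zero, Polynomial.coeff_X_zero, Polynomial.coeff_C_zero, Polynomial.coeff_derivative, Polynomial.coeff_zero]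
    have := step 0
    simp only [Nat.cast_zero, zero_add] at *
    linear_combination this
  · rcases j with _ | j
    · simp only [Polynomial.coeff_add, Polynomial.coeff_sub, Polynomial.coeff_mul_X, Polynomial.mul_coeff_zero, Polynomial.coeff_X_zero, Polynomial.coeff_C_mul, Polynomial.coeff_derivative, Polynomial.coeff_zero]
      have := step 1
      simp only [Nat.cast_zero, Nat.cast_one, zero_add] at *
      linear_combination this
    · simp only [Polynomial.coeff_add, Polynomial.coeff_sub, Polynomial.coeff_mul_X, Polynomial.coeff_C_mul, Polynomial.coeff_derivative, Polynomial.coeff_zero]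
      have := step (j+1+1)
      push_cast at *
      linear_combination this

lemma jpoly_ode (k α β : ℕ) : Polynomial.X * (1 - Polynomial.X) * Polynomial.derivative (Polynomial.derivative (jpoly k α β))
   + (Polynomial.C ((β:ℝ)+1) - Polynomial.C ((α:ℝ)+β+2) * Polynomial.X) * Polynomial.derivative (jpoly k α β)
   = - Polynomial.C ((k:ℝ) * (k+α+β+1)) * jpoly k α β := by
  simp only [jpoly, Polynomial.derivative_C_mul]
  linear_combination Polynomial.C ((-1:ℝ)^k / (k.factorial:ℝ)) * gQ_ode k α β

def phi (n m k : ℕ) : MP2 := V m * lf (jpoly k (2*n-1) (m+1))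

def lam (n m k : ℕ) : ℝ := 4 * ((k:ℝ)+n) * (k+m+n+1)

lemma phi_eig (n m k : ℕ) (hn : 1 ≤ n) : Lop n (phi n m k) = MvPolynomial.C (4*n*(n+1) - lam n m k) * phi n m k := by
  have ode := congrArg lf (jpoly_ode k (2*n-1) (m+1))
  have hc : (((2*n-1:ℕ):ℝ)) = 2*n-1 := by push_cast [Nat.cast_sub (show 1 ≤ 2*n by omega)]; ring
  simp only [lf, map_add, map_mul, map_sub, map_neg, Polynomial.aeval_X, Polynomial.aeval_C, map_one, MvPolynomial.algebraMap_eq] at ode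
  rw [hc] at ode
  have hV := V_facts m
  obtain ⟨⟨a1, -⟩, -, ⟨c1, -⟩⟩ := hV
  simp only [phi, Lop, Eu, Lap, D0_mul, D1_mul, D0_lf, D1_lf, D0_add, D1_add, mul_zero, add_zero, D0_zero, D1_zero, zero_add] at *
  push_cast at ode
  simp only [lam, map_add, map_sub, map_mul, map_natCast, map_ofNat, map_one, lf] at *
  linear_combination (1-vr) * lf (jpoly k (2*n-1) (m+1)) * c1 
    + (4 * (1-vr) * lf (Polynomial.derivative (jpoly k (2*n-1) (m+1))) - 4 * (n:MP2) * lf (jpoly k (2*n-1) (m+1))) * a1 + 4 * V m * ode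

end
noncomputable section

abbrev vv (m : ℕ) (x ρ : ℝ) : ℝ := ev (V m) x ρ

lemma vv_zero (x ρ : ℝ) : vv 0 x ρ = 1 := by simp [vv, V]
lemma vv_one (x ρ : ℝ) : vv 1 x ρ = 2 * x := by simp [vv, V]
lemma vv_rec (m : ℕ) (x ρ : ℝ) : vv (m+2) x ρ = 2 * x * vv (m+1) x ρ - ρ * vv m x ρ := by
  simp [vv, V]

lemma vv_bound (x ρ : ℝ) (h : (x, ρ) ∈ Om) (m : ℕ) : |vv m x ρ| ≤ m + 1 := by
  have h1 : x^2 ≤ ρ := h.1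
  have h2 : ρ ≤ 1 := h.2
  set y := Real.sqrt (ρ - x^2) with hy
  have hy2 : y^2 = ρ - x^2 := Real.sq_sqrt (by linarith)
  set ζ : ℂ := ⟨x, y⟩ with hζ
  set ζ' : ℂ := ⟨x, -y⟩ with hζ'
  have hs : ζ + ζ' = 2 * (x:ℂ) := by
    apply Complex.ext <;> simp [hζ, hζ']; ring
  have hp : ζ * ζ' = (ρ:ℂ) := by
    apply Complex.ext <;> simp [hζ, hζ']
    · nlinarith
    · ring
  have nz : ‖ζ‖ ≤ 1 := by
    rw [← sq_le_one_iff₀ (norm_nonneg _), ← Complex.normSq_eq_norm_sq, Complex.normSq_mk]; nlinarith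
  have nz' : ‖ζ'‖ ≤ 1 := by
    rw [← sq_le_one_iff₀ (norm_nonneg _), ← Complex.normSq_eq_norm_sq, Complex.normSq_mk]; nlinarith
  have key : ∀ m : ℕ, ((vv (m+1) x ρ : ℝ) : ℂ) = ζ * (vv m x ρ : ℝ) + ζ'^(m+1) := by
    intro m
    induction m with
    | zero => 
      rw [vv_zero, vv_one]; push_cast; rw [← hs]; ring
    | succ m ih =>
      rw [vv_rec]; push_cast; rw [← hs, ← hp]
      linear_combination ζ' * ih
  induction m with
  | zero => simp [vv_zero]
  | succ m ih =>
    have e := congrArg norm (key m)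
    rw [Complex.norm_real, Real.norm_eq_abs] at e
    rw [e]
    refine (norm_add_le _ _).trans ?_
    rw [norm_mul, norm_pow, Complex.norm_real, Real.norm_eq_abs]
    have := pow_le_one₀ (n := m+1) (norm_nonneg ζ') nz'
    push_cast
    nlinarith [abs_nonneg (vv m x ρ), norm_nonneg ζ]

/-- generating coefficients -/
def kap (n m i : ℕ) : ℝ := ((m:ℝ)+1) * (n+m+i).factorial * n.ascFactorial i /
  (n.factorial * (m+i+1).factorial * i.factorial)

lemma kap_nonneg (n m i : ℕ) : 0 ≤ kap n m i := by unfold kap; positivity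

lemma kap_le (n m i : ℕ) : kap n m i ≤ ((n:ℝ)+1)^(2*n) * (((m:ℝ)+1)^(2*n+1) * ((i:ℝ)+1)^(2*n)) := by
  unfold kap
  have e1 : ((n+m+i).factorial:ℝ) ≤ (m+i+1).factorial * ((n:ℝ)+m+i)^n := by
    have h := Nat.factorial_mul_pow_le_factorial (m := m+i) (n := n)
    have h2 : (m+i+n).factorial ≤ (m+i).factorial * (m+i+n)^n := by
      have := Nat.factorial_mul_ascFactorial (m+i) n
      rw [← this]
      gcongr
      have := Nat.ascFactorial_le_pow_add (m+i) n
      exact this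
    have h3 : (m+i).factorial ≤ (m+i+1).factorial := Nat.factorial_le (by omega)
    have h4 : (n+m+i).factorial ≤ (m+i+1).factorial * (n+m+i)^n := by
      have e : n+m+i = m+i+n := by ring
      rw [e]; exact h2.trans (by gcongr)
    exact_mod_cast h4
  have e2 : (n.ascFactorial i:ℝ) ≤ i.factorial * ((n:ℝ)+i)^n := by
    have h : n.ascFactorial i ≤ (n+1).ascFactorial i := by
      have : ∀ i, n.ascFactorial i ≤ (n+1).ascFactorial i := by
        intro i
        induction i with
        | zero => simp
        | succ i ih => rw [Nat.ascFactorial_succ, Nat.ascFactorial_succ]; exact Nat.mul_le_mul (by omega) ih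
      exact this i 
    have h1 : (n+1).ascFactorial i ≤ (n+i).factorial := by
      have := Nat.factorial_mul_ascFactorial n i
      rw [← this]; exact Nat.le_mul_of_pos_left _ (Nat.factorial_pos _)
    have h2 : (i+n).factorial ≤ i.factorial * (i+n)^n := by
      rw [← Nat.factorial_mul_ascFactorial i n]
      gcongr
      exact Nat.ascFactorial_le_pow_add i n
    have : n.ascFactorial i ≤ i.factorial * (n+i)^n := by
      rw [add_comm n i] at *; exact (h.trans h1).trans h2
    exact_mod_cast this
  have e3 : (1:ℝ) ≤ n.factorial := by exact_mod_cast Nat.factorial_pos n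
  have hm : (0:ℝ) ≤ m := by positivity
  have hi : (0:ℝ) ≤ i := by positivity
  have hn : (0:ℝ) ≤ n := by positivity
  have f1 : ((n:ℝ)+m+i) ≤ (n+1)*((m+1)*(i+1)) := by nlinarith [mul_nonneg hm hi, mul_nonneg hn hi, mul_nonneg hn hm, mul_nonneg hn (mul_nonneg hm hi)]
  have f2 : ((n:ℝ)+i) ≤ (n+1)*((m+1)*(i+1)) := by linarith
  rw [div_le_iff₀ (by positivity)]
  calc _ ≤ ((m:ℝ)+1) * ((m+i+1).factorial * ((n+1)*((m+1)*(i+1)))^n) * (i.factorial * ((n+1)*((m+1)*(i+1)))^n) := by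
        gcongr
        · exact e1.trans (by gcongr)
        · exact e2.trans (by gcongr)
    _ = ((n:ℝ)+1)^(2*n) * (((m:ℝ)+1)^(2*n+1) * ((i:ℝ)+1)^(2*n)) * (1 * (m+i+1).factorial * i.factorial) := by
        simp only [mul_pow, pow_mul, pow_succ, two_mul, pow_add]; ring
    _ ≤ _ := by gcongr

lemma sum1 (p : ℕ) (z : ℝ) (h0 : 0 ≤ z) (h1 : z < 1) : Summable (fun m : ℕ => ((m:ℝ)+1)^p * z^m) := by
  rcases eq_or_lt_of_le h0 with h | h
  · refine summable_of_ne_finset_zero (s := {0}) ?_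
    intro b hb
    have : b ≠ 0 := by simpa using hb
    rw [← h]; simp [this]
  · have := summable_pow_mul_geometric_of_norm_lt_one (R := ℝ) p (r := z) (by rw [Real.norm_eq_abs, abs_of_pos h]; exact h1)
    have h2 := ((summable_nat_add_iff 1).2 this).mul_right z⁻¹
    refine h2.congr ?_
    intro b
    push_cast
    rw [pow_succ]; field_simp

lemma kap_summable (n p : ℕ) (z : ℝ) (h0 : 0 ≤ z) (h1 : z < 1) :
    Summable (fun q : ℕ × ℕ => kap n q.1 q.2 * ((q.1:ℝ)+1)^p * z^(q.1+2*q.2)) := by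
  have A := sum1 (2*n+1+p) z h0 h1
  have B := sum1 (2*n) z h0 h1
  have C := (Summable.mul_of_nonneg A B (fun _ => by positivity) (fun _ => by positivity)).mul_left (((n:ℝ)+1)^(2*n))
  refine Summable.of_nonneg_of_le (fun q => ?_) (fun q => ?_) C
  · have := kap_nonneg n q.1 q.2; positivity
  · have h3 : z^(q.1+2*q.2) ≤ z^q.1 * z^q.2 := by
      rw [← pow_add]; exact pow_le_pow_of_le_one h0 h1.le (by omega)
    have h4 := kap_le n q.1 q.2
    calc _ ≤ (((n:ℝ)+1)^(2*n) * (((q.1:ℝ)+1)^(2*n+1) * ((q.2:ℝ)+1)^(2*n))) * ((q.1:ℝ)+1)^p * (z^q.1 * z^q.2) := by gcongr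
      _ = _ := by rw [pow_add ((q.1:ℝ)+1) (2*n+1) p]; ring

def ww (z x ρ : ℝ) (m i : ℕ) : ℝ := z^(m+2*i) * ρ^i * vv m x ρ

lemma ww_bound (z x ρ : ℝ) (h0 : 0 ≤ z) (h : (x, ρ) ∈ Om) (m i : ℕ) : |ww z x ρ m i| ≤ z^(m+2*i) * (m+1) := by
  have h1 : x^2 ≤ ρ := h.1
  have h2 : ρ ≤ 1 := h.2
  have h3 : 0 ≤ ρ := by nlinarith [sq_nonneg x]
  unfold ww
  rw [abs_mul, abs_of_nonneg (by positivity)]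
  have := vv_bound x ρ h m
  have h5 : ρ^i ≤ 1 := pow_le_one₀ h3 h2
  have h6 : 0 ≤ z^(m+2*i) := by positivity
  calc _ ≤ z^(m+2*i) * 1 * (m+1) := by gcongr
    _ = _ := by ring

lemma gen_step (κ' κ : ℕ → ℕ → ℝ) (z x ρ : ℝ)
    (hrel : ∀ m i, κ' m i - (if m = 0 then 0 else κ' (m-1) i) - (if i = 0 then 0 else κ' (m+1) (i-1))
      + (if i = 0 then 0 else κ' m (i-1)) = κ m i)
    (hs : Summable (fun q : ℕ × ℕ => κ' q.1 q.2 * ww z x ρ q.1 q.2))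
    (hs1 : Summable (fun q : ℕ × ℕ => κ' q.1 q.2 * ww z x ρ (q.1+1) q.2)) :
    HasSum (fun q : ℕ × ℕ => κ q.1 q.2 * ww z x ρ q.1 q.2)
      ((1 - 2*z*x + z^2*ρ) * ∑' q : ℕ × ℕ, κ' q.1 q.2 * ww z x ρ q.1 q.2) := by
  set S := ∑' q : ℕ × ℕ, κ' q.1 q.2 * ww z x ρ q.1 q.2
  set S1 := ∑' q : ℕ × ℕ, κ' q.1 q.2 * ww z x ρ (q.1+1) q.2
  have HS : HasSum (fun q : ℕ × ℕ => κ' q.1 q.2 * ww z x ρ q.1 q.2) S := hs.hasSum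
  have HS1 : HasSum (fun q : ℕ × ℕ => κ' q.1 q.2 * ww z x ρ (q.1+1) q.2) S1 := hs1.hasSum
  have HS2 : HasSum (fun q : ℕ × ℕ => if q.1 = 0 then 0 else κ' q.1 q.2 * ww z x ρ (q.1-1) (q.2+1)) (2*z*x*S - S1) := by
    refine ((HS.mul_left (2*z*x)).sub HS1).congr_fun ?_
    rintro ⟨m, i⟩
    rcases m with _ | m
    · simp only [ww, vv_zero, vv_one, if_true, zero_add]; ring
    · simp only [ww, vv_rec, Nat.add_eq_zero_iff, one_ne_zero, and_false, if_false, Nat.add_sub_cancel]; ring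
  have i1 : Function.Injective (fun q : ℕ × ℕ => ((q.1+1, q.2) : ℕ × ℕ)) := by
    rintro ⟨a,b⟩ ⟨c,d⟩ h; simp at h ⊢; exact h
  have i2 : Function.Injective (fun q : ℕ × ℕ => ((q.1, q.2+1) : ℕ × ℕ)) := by
    rintro ⟨a,b⟩ ⟨c,d⟩ h; simp at h ⊢; exact h
  have G1 : HasSum (fun q : ℕ × ℕ => (if q.1 = 0 then 0 else κ' (q.1-1) q.2) * ww z x ρ q.1 q.2) S1 := by
    rw [← i1.hasSum_iff]
    · refine HS1.congr_fun ?_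
      rintro ⟨m, i⟩; simp
    · rintro ⟨m, i⟩ h
      rcases m with _ | m
      · simp
      · exact absurd ⟨(m,i), rfl⟩ h
  have G3 : HasSum (fun q : ℕ × ℕ => (if q.2 = 0 then 0 else κ' q.1 (q.2-1)) * ww z x ρ q.1 q.2) (z^2*ρ*S) := by
    rw [← i2.hasSum_iff]
    · refine (HS.mul_left (z^2*ρ)).congr_fun ?_
      rintro ⟨m, i⟩; simp [ww]; ring
    · rintro ⟨m, i⟩ h
      rcases i with _ | i
      · simp
      · exact absurd ⟨(m,i), rfl⟩ h
  have G2' : HasSum (fun q : ℕ × ℕ => κ' (q.1+1) q.2 * ww z x ρ q.1 (q.2+1)) (2*z*x*S - S1) := by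
    rw [← i1.hasSum_iff] at HS2
    · refine HS2.congr_fun ?_
      rintro ⟨m, i⟩; simp
    · rintro ⟨m, i⟩ h
      rcases m with _ | m
      · simp
      · exact absurd ⟨(m,i), rfl⟩ h
  have G2 : HasSum (fun q : ℕ × ℕ => (if q.2 = 0 then 0 else κ' (q.1+1) (q.2-1)) * ww z x ρ q.1 q.2) (2*z*x*S - S1) := by
    rw [← i2.hasSum_iff]
    · refine G2'.congr_fun ?_
      rintro ⟨m, i⟩; simp
    · rintro ⟨m, i⟩ h
      rcases i with _ | i
      · simp
      · exact absurd ⟨(m,i), rfl⟩ h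
  have := ((HS.sub G1).sub G2).add G3
  rw [show (1 - 2*z*x + z^2*ρ) * S = S - S1 - (2 * z * x * S - S1) + z ^ 2 * ρ * S by ring]
  refine this.congr_fun ?_
  intro q; rw [← hrel]; ring

lemma kap_rel (n m i : ℕ) : kap (n+1) m i - (if m = 0 then 0 else kap (n+1) (m-1) i) - (if i = 0 then 0 else kap (n+1) (m+1) (i-1))
      + (if i = 0 then 0 else kap (n+1) m (i-1)) = kap n m i := by
  have e1 : (if m = 0 then 0 else kap (n+1) (m-1) i) = (m:ℝ) * (n+m+i).factorial * (n+1).ascFactorial i /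
  ((n+1).factorial * (m+i).factorial * i.factorial) := by
    rcases m with _ | m
    · simp
    · simp only [Nat.add_eq_zero_iff, one_ne_zero, and_false, if_false, Nat.add_sub_cancel, kap]
      have a1 : n+1+m+i = n+(m+1)+i := by ring
      have a2 : m+i+1 = m+1+i := by ring
      rw [a1, a2]; push_cast; ring
  rw [e1]
  rcases i with _ | j
  · simp only [if_true, kap, Nat.ascFactorial_zero, Nat.factorial_zero, add_zero, sub_zero]
    have a1 : n+1+m = n+m+1 := by ring
    rw [a1, Nat.factorial_succ (n+m), Nat.factorial_succ n, Nat.factorial_succ m]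
    push_cast
    field_simp
    ring
  · simp only [Nat.add_eq_zero_iff, one_ne_zero, and_false, if_false, Nat.add_sub_cancel, kap]
    have a1 : n+1+m+(j+1) = n+m+j+1+1 := by ring
    have a2 : n+1+(m+1)+j = n+m+j+1+1 := by ring
    have a3 : n+1+m+j = n+m+j+1 := by ring
    have a4 : n+m+(j+1) = n+m+j+1 := by ring
    have a5 : m+(j+1)+1 = m+j+1+1 := by ring
    have a6 : m+1+j+1 = m+j+1+1 := by ring
    have a7 : m+(j+1) = m+j+1 := by ring
    rw [a1,a2,a3,a4,a5,a6,a7]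
    have b1 : n.ascFactorial (j+1) = n * (n+1).ascFactorial j := by
      rw [Nat.ascFactorial_succ, Nat.succ_ascFactorial]
    rw [b1, Nat.ascFactorial_succ, Nat.factorial_succ (n+m+j+1), Nat.factorial_succ n, Nat.factorial_succ (m+j+1), Nat.factorial_succ j]
    push_cast
    field_simp
    ring

lemma kap0_rel (m i : ℕ) : kap 0 m i - (if m = 0 then 0 else kap 0 (m-1) i) - (if i = 0 then 0 else kap 0 (m+1) (i-1))
      + (if i = 0 then 0 else kap 0 m (i-1)) = if m = 0 ∧ i = 0 then 1 else 0 := by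
  have h0 : ∀ m, kap 0 m 0 = 1 := by
    intro m
    simp only [kap, Nat.ascFactorial_zero, Nat.factorial_zero, add_zero, zero_add, Nat.factorial_succ m]
    push_cast; field_simp
  have h1 : ∀ m i, kap 0 m (i+1) = 0 := by
    intro m i; simp [kap, Nat.zero_ascFactorial]
  rcases m with _ | m <;> rcases i with _ | _ | i <;> simp [h0, h1]

lemma gen_D_pos (z x ρ : ℝ) (h0 : 0 ≤ z) (h1 : z < 1) (h : (x, ρ) ∈ Om) : 0 < 1 - 2*z*x + z^2*ρ := by
  have a : x^2 ≤ ρ := h.1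
  have b : ρ ≤ 1 := h.2
  have hx : x ≤ 1 := by nlinarith
  have : 0 < (1 - z*x)^2 := by
    have : z * x < 1 := by nlinarith
    have : 0 < 1 - z*x := by linarith
    positivity
  nlinarith [mul_le_mul_of_nonneg_left a (sq_nonneg z)]

lemma gen_fun (n : ℕ) (z x ρ : ℝ) (h0 : 0 ≤ z) (h1 : z < 1) (h : (x, ρ) ∈ Om) :
    HasSum (fun q : ℕ × ℕ => kap n q.1 q.2 * ww z x ρ q.1 q.2) (((1 - 2*z*x + z^2*ρ)^(n+1))⁻¹) := by
  have hD := gen_D_pos z x ρ h0 h1 h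
  have s0 : ∀ n, Summable (fun q : ℕ × ℕ => kap n q.1 q.2 * ww z x ρ q.1 q.2) := by
    intro n
    refine Summable.of_norm_bounded (kap_summable n 1 z h0 h1) ?_
    intro q
    rw [norm_mul, Real.norm_eq_abs, abs_of_nonneg (kap_nonneg _ _ _), Real.norm_eq_abs]
    have := ww_bound z x ρ h0 h q.1 q.2
    have k := kap_nonneg n q.1 q.2
    calc _ ≤ kap n q.1 q.2 * (z^(q.1+2*q.2) * (q.1+1)) := by gcongr
      _ = _ := by ring
  have s1 : ∀ n, Summable (fun q : ℕ × ℕ => kap n q.1 q.2 * ww z x ρ (q.1+1) q.2) := by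
    intro n
    refine Summable.of_norm_bounded ((kap_summable n 1 z h0 h1).mul_left 2) ?_
    intro q
    rw [norm_mul, Real.norm_eq_abs, abs_of_nonneg (kap_nonneg _ _ _), Real.norm_eq_abs]
    have := ww_bound z x ρ h0 h (q.1+1) q.2
    have k := kap_nonneg n q.1 q.2
    have h4 : z^(q.1+1+2*q.2) ≤ z^(q.1+2*q.2) := pow_le_pow_of_le_one h0 h1.le (by omega)
    have h5 : (((q.1+1:ℕ):ℝ)+1) ≤ 2 * (q.1+1) := by push_cast; linarith [(Nat.cast_nonneg q.1 : (0:ℝ) ≤ q.1)]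
    calc _ ≤ kap n q.1 q.2 * (z^(q.1+2*q.2) * (2*(q.1+1))) := by
            gcongr
            exact this.trans (by gcongr)
      _ = _ := by ring
  have base := gen_step (kap 0) (fun m i => if m = 0 ∧ i = 0 then 1 else 0) z x ρ kap0_rel (s0 0) (s1 0)
  have base2 : (1 - 2*z*x + z^2*ρ) * ∑' q : ℕ × ℕ, kap 0 q.1 q.2 * ww z x ρ q.1 q.2 = 1 := by
    refine base.unique ?_
    have := hasSum_ite_eq ((0:ℕ),(0:ℕ)) (1:ℝ)
    refine this.congr_fun ?_
    rintro ⟨m, i⟩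
    by_cases hh : m = 0 ∧ i = 0
    · obtain ⟨rfl, rfl⟩ := hh; simp [ww, vv_zero]
    · have : ¬ ((m,i) = ((0:ℕ),(0:ℕ))) := by simpa using hh
      simp [hh]
  induction n with
  | zero =>
    have := (s0 0).hasSum
    rwa [eq_inv_of_mul_eq_one_right base2, show (1 - 2*z*x + z^2*ρ) = (1 - 2*z*x + z^2*ρ)^(0+1) by ring] at this
  | succ n ih =>
    have st := gen_step (kap (n+1)) (kap n) z x ρ (kap_rel n) (s0 (n+1)) (s1 (n+1))
    have e := st.unique ih
    have := (s0 (n+1)).hasSum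
    convert this using 1
    rw [pow_succ, mul_inv, ← e]
    field_simp

end
noncomputable section

def EE (n : ℕ) (t x ρ : ℝ) (m i : ℕ) : ℝ :=
  ∑ k ∈ Finset.range (i+1), cc (2*n-1) (m+1) i k * Real.exp (-lam n m k * t) * ev (phi n m k) x ρ

lemma ev_lf (q : Polynomial ℝ) (x ρ : ℝ) : ev (lf q) x ρ = q.eval ρ := by
  induction q using Polynomial.induction_on' with
  | add p q hp hq => simp only [lf, map_add, ev_add, Polynomial.eval_add] at *; rw [hp, hq]
  | monomial k a =>
    simp [lf, ev, vr, Polynomial.aeval_monomial, MvPolynomial.algebraMap_eq]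

lemma ev_phi (n m k : ℕ) (x ρ : ℝ) : ev (phi n m k) x ρ = vv m x ρ * jacP k (2*n-1) (m+1) ρ := by
  rw [phi, ev_mul, ev_lf, jacP_eq]

lemma EE_zero (n m i : ℕ) (x ρ : ℝ) : ∑ k ∈ Finset.range (i+1), cc (2*n-1) (m+1) i k * ev (phi n m k) x ρ = ρ^i * vv m x ρ := by
  have h := congrArg (Polynomial.eval ρ) (inv_poly (2*n-1) (m+1) i)
  simp only [Polynomial.eval_finset_sum, Polynomial.eval_mul, Polynomial.eval_C, Polynomial.eval_pow, Polynomial.eval_X] at h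
  rw [← h, Finset.sum_mul]
  refine Finset.sum_congr rfl fun k _ => ?_
  rw [ev_phi, jacP_eq]; ring

lemma fin_pos (n : ℕ) (hn : 1 ≤ n) (s : Finset (ℕ × ℕ)) (b : ℕ × ℕ → ℝ) (δ : ℝ) (hδ : 0 ≤ δ)
    (h0 : ∀ y ∈ Om, -δ ≤ ∑ q ∈ s, b q * (y.2^q.2 * vv q.1 y.1 y.2)) (t : ℝ) (ht : 0 ≤ t) :
    ∀ y ∈ Om, -δ ≤ ∑ q ∈ s, b q * EE n t y.1 y.2 q.1 q.2 := by
  have H := par_max n (s.sigma (fun q => Finset.range (q.2+1)))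
    (fun j => b j.1 * cc (2*n-1) (j.1.1+1) j.1.2 j.2) (fun j => lam n j.1.1 j.2) (fun j => phi n j.1.1 j.2)
    (4*n*(n+1)) (by positivity) (fun j _ => phi_eig n _ _ hn) δ hδ ?_ t ht
  · intro y hy
    have := H y hy
    rw [Finset.sum_sigma] at this
    refine this.trans (le_of_eq ?_)
    refine Finset.sum_congr rfl fun q _ => ?_
    rw [EE, Finset.mul_sum]
    refine Finset.sum_congr rfl fun k _ => ?_
    ring
  · intro y hy
    refine (h0 y hy).trans (le_of_eq ?_)
    rw [Finset.sum_sigma]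
    refine Finset.sum_congr rfl fun q _ => ?_
    rw [← EE_zero n, Finset.mul_sum]
    refine Finset.sum_congr rfl fun k _ => ?_
    ring

lemma rho_nonneg {y : ℝ × ℝ} (h : y ∈ Om) : 0 ≤ y.2 := (sq_nonneg y.1).trans h.1

lemma pv_bound {y : ℝ × ℝ} (h : y ∈ Om) (m i : ℕ) : |y.2^i * vv m y.1 y.2| ≤ m+1 := by
  rw [abs_mul, abs_of_nonneg (pow_nonneg (rho_nonneg h) _)]
  have := vv_bound y.1 y.2 h m
  have h5 : y.2^i ≤ 1 := pow_le_one₀ (rho_nonneg h) h.2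
  calc _ ≤ 1 * ((m:ℝ)+1) := by gcongr
    _ = _ := by ring

lemma EE_bound (n : ℕ) (hn : 1 ≤ n) (t : ℝ) (ht : 0 ≤ t) {y : ℝ × ℝ} (hy : y ∈ Om) (m i : ℕ) :
    |EE n t y.1 y.2 m i| ≤ m + 1 := by
  have h1 := fin_pos n hn {(m,i)} (fun _ => 1) (m+1) (by positivity)
    (fun y hy => by simpa using (abs_le.1 (pv_bound hy m i)).1) t ht y hy
  have h2 := fin_pos n hn {(m,i)} (fun _ => -1) (m+1) (by positivity)
    (fun y hy => by have := (abs_le.1 (pv_bound hy m i)).2; simp; linarith) t ht y hy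
  simp at h1 h2
  rw [abs_le]; constructor <;> linarith

lemma E_pos (n : ℕ) (hn : 1 ≤ n) (b : ℕ × ℕ → ℝ) (hb : Summable (fun q => |b q| * ((q.1:ℝ)+1)))
    (h0 : ∀ y ∈ Om, 0 ≤ ∑' q, b q * (y.2^q.2 * vv q.1 y.1 y.2)) (t : ℝ) (ht : 0 ≤ t) :
    ∀ y ∈ Om, 0 ≤ ∑' q, b q * EE n t y.1 y.2 q.1 q.2 := by
  intro y hy
  set Tt := ∑' q, |b q| * ((q.1:ℝ)+1) with hT
  have key : ∀ s : Finset (ℕ × ℕ), -(Tt - ∑ q ∈ s, |b q| * ((q.1:ℝ)+1)) ≤ ∑ q ∈ s, b q * EE n t y.1 y.2 q.1 q.2 := by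
    intro s
    refine fin_pos n hn s b _ ?_ ?_ t ht y hy
    · have := hb.sum_le_tsum s (fun q _ => by positivity)
      linarith
    · intro y hy
      have s1 : Summable (fun q => b q * (y.2^q.2 * vv q.1 y.1 y.2)) := by
        refine Summable.of_norm_bounded hb fun q => ?_
        rw [norm_mul, Real.norm_eq_abs, Real.norm_eq_abs]
        gcongr
        exact pv_bound hy _ _
      have s2 := hb.sub s1
      have := s2.sum_le_tsum s (fun q _ => by
        have := mul_le_mul_of_nonneg_left (pv_bound hy q.1 q.2) (abs_nonneg (b q))
        have h3 := le_abs_self (b q * (y.2^q.2 * vv q.1 y.1 y.2))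
        rw [abs_mul] at h3
        linarith)
      rw [hb.tsum_sub s1, Finset.sum_sub_distrib] at this
      have := h0 y hy
      linarith
  have sE : Summable (fun q => b q * EE n t y.1 y.2 q.1 q.2) := by
    refine Summable.of_norm_bounded hb fun q => ?_
    rw [norm_mul, Real.norm_eq_abs, Real.norm_eq_abs]
    gcongr
    exact EE_bound n hn t ht hy _ _
  have l1 : Tendsto (fun s : Finset (ℕ×ℕ) => -(Tt - ∑ q ∈ s, |b q| * ((q.1:ℝ)+1))) atTop (𝓝 (-(Tt - Tt))) :=
    (tendsto_const_nhds.sub hb.hasSum).neg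
  have := le_of_tendsto_of_tendsto' l1 sE.hasSum key
  simpa using this

end
noncomputable section

def AA (n m k : ℕ) : ℝ := ((m:ℝ)+1) * (2*k+m+2*n+1) * ((k+m+2*n).factorial / (k+m+1).factorial) / (n.factorial * (n-1).factorial)

lemma AA_nonneg (n m k : ℕ) : 0 ≤ AA n m k := by unfold AA; positivity

/-- `T_{j+1}` -/
def TT (a b j : ℕ) : ℝ := (a+j).factorial * (b+j).factorial / (j.factorial * (a+b+j).factorial)

def dd (a b j : ℕ) : ℝ := (a:ℝ)*b*((a+j-1).factorial * (b+j-1).factorial / (j.factorial * (a+b+j).factorial))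

lemma dd_nonneg (a b j) : 0 ≤ dd a b j := by unfold dd; positivity
lemma TT_nonneg (a b j) : 0 ≤ TT a b j := by unfold TT; positivity

lemma TT_zero_left (b j) : TT 0 b j = 1 := by
  unfold TT; simp only [zero_add]; field_simp

lemma TT_succ_left (a b j) : TT (a+1) b j = TT a b j * ((a+1+j)/(a+1+b+j)) := by
  unfold TT
  have e1 : a+1+j = a+j+1 := by ring
  have e2 : a+1+b+j = a+b+j+1 := by ring
  rw [e1, e2, Nat.factorial_succ (a+j), Nat.factorial_succ (a+b+j)]
  push_cast
  have : (a:ℝ)+1+b+j ≠ 0 := by positivity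
  have : (a:ℝ)+b+j+1 ≠ 0 := by positivity
  field_simp
  ring

lemma TT_le_one (a b j) : TT a b j ≤ 1 := by
  induction a with
  | zero => rw [TT_zero_left]
  | succ a ih =>
    rw [TT_succ_left]
    have : ((a:ℝ)+1+j)/(a+1+b+j) ≤ 1 := by
      rw [div_le_one (by positivity)]; linarith [(Nat.cast_nonneg b : (0:ℝ) ≤ b)]
    exact mul_le_one₀ ih (by positivity) this

lemma TT_tendsto (a b) : Tendsto (fun j => TT a b j) atTop (𝓝 1) := by
  induction a with
  | zero => simp only [TT_zero_left]; exact tendsto_const_nhds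
  | succ a ih =>
    simp only [TT_succ_left]
    have : Tendsto (fun j : ℕ => ((a:ℝ)+1+j)/(a+1+b+j)) atTop (𝓝 1) := by
      have h : Tendsto (fun j : ℕ => (1:ℝ) - b / ((a:ℝ)+1+b+j)) atTop (𝓝 (1-0)) := by
        refine tendsto_const_nhds.sub ?_
        refine tendsto_const_nhds.div_atTop ?_
        exact tendsto_atTop_add_const_left _ _ tendsto_natCast_atTop_atTop
      rw [sub_zero] at h
      refine h.congr fun j => ?_
      have : (a:ℝ)+1+b+j ≠ 0 := by positivity
      field_simp; ring
    simpa using ih.mul this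

lemma dd_zero (a b : ℕ) (ha : 1 ≤ a) (hb : 1 ≤ b) : dd a b 0 = TT a b 0 := by
  obtain ⟨a, rfl⟩ := Nat.exists_eq_add_of_le' ha
  obtain ⟨b, rfl⟩ := Nat.exists_eq_add_of_le' hb
  simp only [dd, TT, add_zero, Nat.add_sub_cancel, Nat.factorial_succ a, Nat.factorial_succ b]
  push_cast; ring

lemma dd_succ (a b j : ℕ) (ha : 1 ≤ a) (hb : 1 ≤ b) : dd a b (j+1) = TT a b (j+1) - TT a b j := by
  obtain ⟨a, rfl⟩ := Nat.exists_eq_add_of_le' ha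
  obtain ⟨b, rfl⟩ := Nat.exists_eq_add_of_le' hb
  simp only [dd, TT]
  have e1 : a+1+(j+1)-1 = a+j+1 := by omega
  have e2 : b+1+(j+1)-1 = b+j+1 := by omega
  have e3 : a+1+(j+1) = a+j+1+1 := by omega
  have e4 : b+1+(j+1) = b+j+1+1 := by omega
  have e5 : a+1+(b+1)+(j+1) = a+b+j+2+1 := by omega
  have e6 : a+1+(b+1)+j = a+b+j+2 := by omega
  have e7 : a+1+j = a+j+1 := by omega
  have e8 : b+1+j = b+j+1 := by omega
  rw [e1,e2,e3,e4,e5,e6,e7,e8, Nat.factorial_succ (a+j+1), Nat.factorial_succ (b+j+1), Nat.factorial_succ (a+b+j+2), Nat.factorial_succ j]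
  push_cast
  have : (a:ℝ)+b+j+2+1 ≠ 0 := by positivity
  field_simp
  ring

lemma dd_hasSum (a b : ℕ) (ha : 1 ≤ a) (hb : 1 ≤ b) : HasSum (dd a b) 1 := by
  rw [hasSum_iff_tendsto_nat_of_nonneg (dd_nonneg a b), ← tendsto_add_atTop_iff_nat 1]
  refine (TT_tendsto a b).congr fun j => ?_
  induction j with
  | zero => simp [dd_zero a b ha hb]
  | succ j ih => rw [Finset.sum_range_succ, ← ih, dd_succ a b j ha hb]; ring

lemma dd_le_one (a b j : ℕ) (ha : 1 ≤ a) (hb : 1 ≤ b) : dd a b j ≤ 1 :=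
  le_hasSum (dd_hasSum a b ha hb) j (fun _ _ => dd_nonneg _ _ _)

def yy (a b : ℕ) (z : ℝ) : ℝ := ∑' j, dd a b j * (z^2)^j

lemma yy_hasSum (a b : ℕ) (ha : 1 ≤ a) (hb : 1 ≤ b) (z : ℝ) (h0 : 0 ≤ z) (h1 : z ≤ 1) :
    HasSum (fun j => dd a b j * (z^2)^j) (yy a b z) := by
  refine Summable.hasSum ?_
  refine Summable.of_nonneg_of_le (fun j => ?_) (fun j => ?_) (dd_hasSum a b ha hb).summable
  · have := dd_nonneg a b j; positivity
  · have := dd_nonneg a b j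
    have : (z^2)^j ≤ 1 := pow_le_one₀ (by positivity) (by nlinarith)
    nlinarith

lemma yy_nonneg (a b z) : 0 ≤ yy a b z := tsum_nonneg fun j => mul_nonneg (dd_nonneg _ _ _) (by positivity)

lemma yy_le_one (a b : ℕ) (ha : 1 ≤ a) (hb : 1 ≤ b) (z : ℝ) (h0 : 0 ≤ z) (h1 : z ≤ 1) : yy a b z ≤ 1 := by
  refine hasSum_le (fun j => ?_) (yy_hasSum a b ha hb z h0 h1) (dd_hasSum a b ha hb)
  have := dd_nonneg a b j
  have : (z^2)^j ≤ 1 := pow_le_one₀ (by positivity) (by nlinarith)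
  nlinarith

lemma yy_hasSum' (a b : ℕ) (ha : 1 ≤ a) (hb : 1 ≤ b) (z : ℝ) (h0 : 0 ≤ z) (h1 : z < 1) :
    HasSum (fun j => (1-z^2) * TT a b j * (z^2)^j) (yy a b z) := by
  have hz : z^2 < 1 := by nlinarith
  have hs : Summable (fun j => TT a b j * (z^2)^j) := by
    refine Summable.of_nonneg_of_le (fun j => ?_) (fun j => ?_) (summable_geometric_of_lt_one (sq_nonneg z) hz)
    · have := TT_nonneg a b j; positivity
    · have := TT_le_one a b j
      have : 0 ≤ (z^2)^j := by positivity
      nlinarith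
  have H := hs.hasSum
  set S := ∑' j, TT a b j * (z^2)^j
  have H2 : HasSum (fun j => dd a b j * (z^2)^j) ((1-z^2)*S) := by
    have h3 : HasSum (fun j => if j = 0 then 0 else TT a b (j-1) * (z^2)^j) (z^2*S) := by
      rw [← (Nat.succ_injective).hasSum_iff]
      · refine (H.mul_left (z^2)).congr_fun fun j => ?_
        simp [pow_succ]; ring
      · intro j hj
        rcases j with _ | j
        · simp
        · exact absurd ⟨j, rfl⟩ hj
    rw [show (1-z^2)*S = S - z^2*S by ring]
    refine (H.sub h3).congr_fun fun j => ?_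
    rcases j with _ | j
    · simp [dd_zero a b ha hb]
    · simp [dd_succ a b j ha hb]; ring
  rw [(yy_hasSum a b ha hb z h0 h1.le).unique H2]
  refine (H.mul_left (1-z^2)).congr_fun fun j => ?_
  ring

lemma yy_tendsto (a b : ℕ) (ha : 1 ≤ a) (hb : 1 ≤ b) : Tendsto (yy a b) (𝓝[<] 1) (𝓝 1) := by
  have hh : Tendsto (yy a b) (𝓝[<] 1) (𝓝 (∑' j, dd a b j)) := by
   refine tendsto_tsum_of_dominated_convergence (bound := dd a b) (dd_hasSum a b ha hb).summable ?_ ?_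
   · intro j
     have : ContinuousAt (fun z : ℝ => dd a b j * (z^2)^j) 1 := by fun_prop
     have h := this.tendsto
     simp only [one_pow, mul_one] at h
     exact h.mono_left nhdsWithin_le_nhds
   · have : Ioo (0:ℝ) 1 ∈ 𝓝[<] (1:ℝ) := Ioo_mem_nhdsLT (by norm_num)
     filter_upwards [this] with z hz j
     have := dd_nonneg a b j
     have h2 : (z^2)^j ≤ 1 := pow_le_one₀ (by positivity) (by nlinarith [hz.1, hz.2])
     rw [Real.norm_eq_abs, abs_of_nonneg (by positivity)]
     nlinarith
  rwa [(dd_hasSum a b ha hb).tsum_eq] at hh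

lemma coef1 (n m k j : ℕ) (hn : 1 ≤ n) : kap n m (k+j) * cc (2*n-1) (m+1) (k+j) k = 4 * AA n m k / lam n m k * dd (k+n) (k+m+n+1) j := by
  obtain ⟨p, rfl⟩ := Nat.exists_eq_add_of_le' hn
  have e0 : ((p+1).ascFactorial (k+j):ℝ) = (p+k+j).factorial / p.factorial := by
    have := Nat.factorial_mul_ascFactorial p (k+j)
    rw [← add_assoc] at this
    rw [eq_div_iff (by positivity), mul_comm]
    exact_mod_cast this
  have e1 : ((k+j).descFactorial k : ℝ) = (k+j).factorial / j.factorial := by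
    have := Nat.factorial_mul_descFactorial (show k ≤ k+j by omega)
    rw [Nat.add_sub_cancel_left] at this
    rw [eq_div_iff (by positivity), mul_comm]
    exact_mod_cast this
  simp only [kap, cc, AA, lam, dd, e0, e1]
  have c1 : ((2*(p+1)-1:ℕ):ℝ) = 2*p+1 := by rw [show 2*(p+1)-1 = 2*p+1 by omega]; push_cast; ring
  rw [c1]
  have a1 : k + (2 * (p + 1) - 1) + (m + 1) = k+m+2*(p+1) := by omega
  have a2 : k + j + (m + 1) = m + (k+j) + 1 := by omega
  have a3 : k + (m+1) = k+m+1 := by omega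
  have a4 : k + j + k + (2 * (p + 1) - 1) + (m + 1) + 1 = k + (p+1) + (k+m+(p+1)+1) + j := by omega
  have a5 : k + (p+1) + j - 1 = p+k+j := by omega
  have a6 : k + m + (p+1) + 1 + j - 1 = p+1+m+(k+j) := by omega
  have a7 : p + 1 - 1 = p := by omega
  rw [a1,a2,a3,a4,a5,a6,a7]
  push_cast
  have b1 : (k:ℝ)+(p+1) ≠ 0 := by positivity
  have b2 : (k:ℝ)+m+(p+1)+1 ≠ 0 := by positivity
  field_simp
  ring

lemma coef2 (n m k j : ℕ) (hn : 1 ≤ n) : kap n m (k+j) * (4 * ((k+j:ℕ) + (n:ℝ)) * ((k+j:ℕ)+m+n+1)) * cc (2*n-1) (m+1) (k+j) k 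
    = 4 * AA n m k * TT (k+n) (k+m+n+1) j := by
  have h := coef1 n m k j hn
  have h2 : dd (k+n) (k+m+n+1) j * (4 * ((k+j:ℕ) + (n:ℝ)) * ((k+j:ℕ)+m+n+1)) = lam n m k * TT (k+n) (k+m+n+1) j := by
    simp only [dd, TT, lam]
    obtain ⟨p, rfl⟩ := Nat.exists_eq_add_of_le' hn
    have a5 : k + (p+1) + j - 1 = p+k+j := by omega
    have a6 : k + m + (p+1) + 1 + j - 1 = k+m+p+1+j := by omega
    have a7 : k + (p+1) + j = p+k+j+1 := by omega
    have a8 : k + m + (p+1) + 1 + j = k+m+p+1+j+1 := by omega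
    rw [a5,a6,a7,a8, Nat.factorial_succ (p+k+j), Nat.factorial_succ (k+m+p+1+j)]
    push_cast
    ring
  have hl : lam n m k ≠ 0 := by unfold lam; have : (1:ℝ) ≤ n := by exact_mod_cast hn
                                positivity
  calc _ = (kap n m (k+j) * cc (2*n-1) (m+1) (k+j) k) * (4 * ((k+j:ℕ) + (n:ℝ)) * ((k+j:ℕ)+m+n+1)) := by ring
    _ = 4 * AA n m k / lam n m k * (dd (k+n) (k+m+n+1) j * (4 * ((k+j:ℕ) + (n:ℝ)) * ((k+j:ℕ)+m+n+1))) := by rw [h]; ring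
    _ = _ := by rw [h2]; field_simp

lemma kap_up (n m i : ℕ) (hn : 1 ≤ n) : kap n m i * (((i:ℝ)+n) * (i+m+n+1)) = n * (n+1) * kap (n+1) m i := by
  unfold kap
  have b : (n * (n+1).ascFactorial i : ℝ) = (n + i) * n.ascFactorial i := by exact_mod_cast Nat.succ_ascFactorial n i
  have a : n+1+m+i = n+m+i+1 := by ring
  rw [a, Nat.factorial_succ (n+m+i), Nat.factorial_succ n]
  push_cast
  field_simp
  linear_combination (-((n:ℝ)+m+i+1)) * b

lemma reorg (n : ℕ) (t x ρ θ : ℝ) (h0 : 0 ≤ θ) (h1 : θ < 1) (b : ℕ × ℕ → ℝ) (g Y : ℕ × ℕ → ℝ) (u : ℕ × ℕ → ℕ → ℝ)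
    (hc : ∀ m k j, b (m, k+j) * cc (2*n-1) (m+1) (k+j) k = g (m,k) * u (m,k) j)
    (hu : ∀ q j, |u q j| ≤ θ^j)
    (hg : Summable (fun q : ℕ × ℕ => |g q * Real.exp (-lam n q.1 q.2 * t) * ev (phi n q.1 q.2) x ρ|))
    (hY : ∀ q, HasSum (u q) (Y q)) :
    ∑' q : ℕ × ℕ, b q * EE n t x ρ q.1 q.2 = 
      ∑' q : ℕ × ℕ, g q * Y q * Real.exp (-lam n q.1 q.2 * t) * ev (phi n q.1 q.2) x ρ := by
  set G : (ℕ × ℕ) × ℕ → ℝ := fun p => (g p.1 * Real.exp (-lam n p.1.1 p.1.2 * t) * ev (phi n p.1.1 p.1.2) x ρ) * u p.1 p.2 with hG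
  set H : (ℕ × ℕ) × ℕ → ℝ := fun p => b p.1 * (cc (2*n-1) (p.1.1+1) p.1.2 p.2 * Real.exp (-lam n p.1.1 p.2 * t) * ev (phi n p.1.1 p.2) x ρ) with hH
  have sG : Summable G := by
    have := Summable.mul_of_nonneg hg (summable_geometric_of_lt_one h0 h1) (fun _ => abs_nonneg _) (fun _ => by positivity)
    refine Summable.of_norm_bounded this fun p => ?_
    rw [hG, norm_mul, Real.norm_eq_abs, Real.norm_eq_abs]
    exact mul_le_mul_of_nonneg_left (hu _ _) (abs_nonneg _)
  have HG := sG.hasSum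
  have inj : Function.Injective (fun p : (ℕ × ℕ) × ℕ => (((p.1.1, p.1.2+p.2), p.1.2) : (ℕ×ℕ)×ℕ)) := by
    rintro ⟨⟨a,b⟩,c⟩ ⟨⟨a',b'⟩,c'⟩ h
    simp only [Prod.mk.injEq] at h ⊢
    omega
  have HH : HasSum H (∑' p, G p) := by
    rw [← inj.hasSum_iff]
    · refine HG.congr_fun ?_
      rintro ⟨⟨m,k⟩,j⟩
      simp only [hG, hH, Function.comp]
      linear_combination (Real.exp (-lam n m k * t) * ev (phi n m k) x ρ) * hc m k j
    · rintro ⟨⟨m,i⟩,k⟩ h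
      have : i < k := by
        by_contra hh
        apply h
        exact ⟨((m,k),i-k), by simp; omega⟩
      simp only [hH, cc, Nat.descFactorial_eq_zero_iff_lt.2 this]
      simp
  have f1 := HH.prod_fiberwise (g := fun q => b q * EE n t x ρ q.1 q.2) (by
    rintro ⟨m,i⟩
    simp only [hH]
    refine HasSum.mul_left _ ?_
    refine hasSum_sum_of_ne_finset_zero ?_
    intro k hk
    have : i < k := by simpa using hk
    simp [cc, Nat.descFactorial_eq_zero_iff_lt.2 this])
  have f2 := HG.prod_fiberwise (g := fun q => g q * Y q * Real.exp (-lam n q.1 q.2 * t) * ev (phi n q.1 q.2) x ρ) (by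
    rintro ⟨m,k⟩
    simp only [hG]
    have := (hY (m,k)).mul_left (g (m,k) * Real.exp (-lam n m k * t) * ev (phi n m k) x ρ)
    rw [show g (m,k) * Y (m,k) * Real.exp (-lam n m k * t) * ev (phi n m k) x ρ = g (m,k) * Real.exp (-lam n m k * t) * ev (phi n m k) x ρ * Y (m,k) by ring]
    exact this)
  rw [f1.tsum_eq, f2.tsum_eq]

end
noncomputable section

lemma gQ_bound (k α β : ℕ) (ρ : ℝ) (h0 : 0 ≤ ρ) (h1 : ρ ≤ 1) : |(gQ k α β).eval ρ| ≤ 2^k * (2*(k:ℝ)+α+β)^k := by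
  rw [Polynomial.eval_eq_sum_range' (Nat.lt_succ_of_le (gQ_natDegree k α β))]
  have e : (2:ℝ)^k = ∑ i ∈ Finset.range (k+1), (k.choose i:ℝ) := by exact_mod_cast (Nat.sum_range_choose k).symm
  rw [e, Finset.sum_mul]
  refine (Finset.abs_sum_le_sum_abs _ _).trans (Finset.sum_le_sum fun i hi => ?_)
  have hik : i ≤ k := by have := Finset.mem_range.1 hi; omega
  rw [gQ_coeff]
  have f1 : ((k+α+β+i).factorial:ℝ) / (k+α+β).factorial ≤ (2*(k:ℝ)+α+β)^i := by
    rw [div_le_iff₀ (by positivity), mul_comm]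
    have h : (k+α+β+i).factorial ≤ (k+α+β).factorial * (2*k+α+β)^i := by
      rw [← Nat.factorial_mul_ascFactorial (k+α+β) i]
      gcongr
      refine (Nat.ascFactorial_le_pow_add _ _).trans ?_
      exact Nat.pow_le_pow_left (by omega) _
    exact_mod_cast h
  have f2 : ((β+k).factorial:ℝ) / (β+i).factorial ≤ (2*(k:ℝ)+α+β)^(k-i) := by
    rw [div_le_iff₀ (by positivity), mul_comm]
    have h : (β+k).factorial ≤ (β+i).factorial * (2*k+α+β)^(k-i) := by
      have := Nat.factorial_mul_ascFactorial (β+i) (k-i)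
      rw [show β+i+(k-i) = β+k by omega] at this
      rw [← this]
      gcongr
      refine (Nat.ascFactorial_le_pow_add _ _).trans ?_
      exact Nat.pow_le_pow_left (by omega) _
    exact_mod_cast h
  have f3 : ρ^i ≤ 1 := pow_le_one₀ h0 h1
  rw [abs_mul, abs_mul, abs_mul, abs_mul, abs_pow, abs_neg, abs_one, one_pow, one_mul, abs_of_nonneg (a := ρ^i) (by positivity),
    abs_of_nonneg (a := (k.choose i:ℝ)) (by positivity), abs_of_nonneg (a := ((k+α+β+i).factorial:ℝ) / (k+α+β).factorial) (by positivity),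
    abs_of_nonneg (a := ((β+k).factorial:ℝ) / (β+i).factorial) (by positivity)]
  calc _ ≤ (k.choose i:ℝ) * (2*(k:ℝ)+α+β)^i * (2*(k:ℝ)+α+β)^(k-i) * 1 := by gcongr
    _ = _ := by rw [mul_one, mul_assoc, ← pow_add, Nat.add_sub_cancel' hik]

lemma jacP_bound (k α β : ℕ) (ρ t : ℝ) (h0 : 0 ≤ ρ) (h1 : ρ ≤ 1) (ht : 0 < t) :
    |jacP k α β ρ| ≤ (2/t)^k * Real.exp (t * (2*(k:ℝ)+α+β)) := by
  rw [jacP, abs_mul, abs_div, abs_pow, abs_neg, abs_one, one_pow, Nat.abs_cast]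
  have h2 := gQ_bound k α β ρ h0 h1
  have h3 := Real.pow_div_factorial_le_exp (t * (2*(k:ℝ)+α+β)) (by positivity) k
  calc _ ≤ 1 / (k.factorial:ℝ) * (2^k * (2*(k:ℝ)+α+β)^k) := by gcongr
    _ = (2/t)^k * ((t * (2*(k:ℝ)+α+β))^k / k.factorial) := by
        rw [div_pow, mul_pow]; field_simp
    _ ≤ _ := by gcongr

lemma AA_le (n m k : ℕ) : AA n m k ≤ (2*(n:ℝ)+2)^(2*n+1) * (((m:ℝ)+1)^(2*n+2) * ((k:ℝ)+1)^(2*n+1)) := by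
  unfold AA
  have hm : (0:ℝ) ≤ m := by positivity
  have hi : (0:ℝ) ≤ k := by positivity
  have hn : (0:ℝ) ≤ n := by positivity
  have h1 : (1:ℝ) ≤ n.factorial * (n-1).factorial := by exact_mod_cast Nat.mul_pos (Nat.factorial_pos n) (Nat.factorial_pos _)
  have f0 : ((k:ℝ)+m+2*n) ≤ (2*n+2) * ((m+1)*(k+1)) := by nlinarith [mul_nonneg hm hi, mul_nonneg hn hi, mul_nonneg hn hm, mul_nonneg hn (mul_nonneg hm hi)]
  have f1 : (2*(k:ℝ)+m+2*n+1) ≤ (2*n+2) * ((m+1)*(k+1)) := by nlinarith [mul_nonneg hm hi, mul_nonneg hn hi, mul_nonneg hn hm, mul_nonneg hn (mul_nonneg hm hi)]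
  have f2 : ((k+m+2*n).factorial:ℝ) / (k+m+1).factorial ≤ ((k:ℝ)+m+2*n)^(2*n) := by
    rw [div_le_iff₀ (by positivity)]
    have h : (k+m+2*n).factorial ≤ (k+m+1).factorial * (k+m+2*n)^(2*n) := by
      rw [← Nat.factorial_mul_ascFactorial (k+m) (2*n)]
      have := Nat.ascFactorial_le_pow_add (k+m) (2*n)
      have h3 : (k+m).factorial ≤ (k+m+1).factorial := Nat.factorial_le (by omega)
      gcongr
    have h' := (Nat.cast_le (α := ℝ)).2 h
    push_cast at h'
    linarith
  calc _ ≤ ((m:ℝ)+1) * (2*k+m+2*n+1) * ((k+m+2*n).factorial / (k+m+1).factorial) := div_le_self (by positivity) h1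
    _ ≤ ((m:ℝ)+1) * ((2*n+2) * ((m+1)*(k+1))) * ((2*n+2) * ((m+1)*(k+1)))^(2*n) := by
        gcongr
        exact f2.trans (by gcongr)
    _ = _ := by simp only [mul_pow]; ring

lemma crude (n : ℕ) (hn : 1 ≤ n) (t : ℝ) (ht : 0 < t) {y : ℝ × ℝ} (hy : y ∈ Om) :
    Summable (fun q : ℕ × ℕ => AA n q.1 q.2 * Real.exp (-lam n q.1 q.2 * t) * |ev (phi n q.1 q.2) y.1 y.2|) := by
  set c := Real.log (2/t) + 2*t with hc
  have A := sum1 (2*n+3) (Real.exp (-(3*t))) (by positivity) (by rw [Real.exp_lt_one_iff]; linarith)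
  have B := sum1 (2*n+1) (Real.exp (-t)) (by positivity) (by rw [Real.exp_lt_one_iff]; linarith)
  have C := (Summable.mul_of_nonneg A B (fun _ => by positivity) (fun _ => by positivity)).mul_left 
    ((2*(n:ℝ)+2)^(2*n+1) * (Real.exp (2*n*t) * Real.exp ((c+t)^2/(16*t))))
  refine Summable.of_nonneg_of_le (fun q => ?_) (fun q => ?_) C
  · have := AA_nonneg n q.1 q.2; positivity
  obtain ⟨m, k⟩ := q
  simp only
  have h1 := AA_le n m k
  have h2 := vv_bound y.1 y.2 hy m
  have h3 := jacP_bound k (2*n-1) (m+1) y.2 t (rho_nonneg hy) hy.2 ht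
  have hcn : (((2*n-1:ℕ):ℝ)) = 2*n-1 := by push_cast [Nat.cast_sub (show 1 ≤ 2*n by omega)]; ring
  rw [hcn] at h3
  have h4 : (2/t)^k * Real.exp (t * (2*(k:ℝ)+(2*n-1)+(m+1:ℕ))) * Real.exp (-lam n m k * t) ≤
     (Real.exp (2*n*t) * Real.exp ((c+t)^2/(16*t))) * (Real.exp (-(3*t))^m * Real.exp (-t)^k) := by
    have e : (2/t)^k = Real.exp (k * Real.log (2/t)) := by
      rw [Real.exp_nat_mul, Real.exp_log (by positivity)]
    rw [e, ← Real.exp_nat_mul, ← Real.exp_nat_mul, ← Real.exp_add, ← Real.exp_add, ← Real.exp_add, ← Real.exp_add, ← Real.exp_add, Real.exp_le_exp]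
    have hl : 4*((k:ℝ)^2+m) ≤ lam n m k := by
      unfold lam
      have hm : (0:ℝ) ≤ m := by positivity
      have hi : (0:ℝ) ≤ k := by positivity
      have h1 : (1:ℝ) ≤ n := by exact_mod_cast hn
      have : (k:ℝ)^2+m ≤ (k+n)*(k+m+n+1) := by nlinarith [mul_nonneg hm hi, mul_nonneg hm (sub_nonneg.2 h1), mul_nonneg hi (sub_nonneg.2 h1), mul_nonneg (sub_nonneg.2 h1) (sub_nonneg.2 h1)]
      linarith
    have hq : (k:ℝ)*(c+t) - 4*t*k^2 ≤ (c+t)^2/(16*t) := by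
      rw [le_div_iff₀ (by positivity)]
      nlinarith [sq_nonneg (c+t-8*t*k)]
    have := mul_le_mul_of_nonneg_right hl ht.le
    push_cast
    rw [show Real.log (2/t) = c - 2*t by rw [hc]; ring]
    nlinarith
  rw [ev_phi, abs_mul]
  have hE := Real.exp_pos (-lam n m k * t)
  have hA := AA_nonneg n m k
  calc _ ≤ AA n m k * Real.exp (-lam n m k * t) * (((m:ℝ)+1) * ((2/t)^k * Real.exp (t * (2*(k:ℝ)+(2*n-1)+(m+1:ℕ))))) := by gcongr
    _ = AA n m k * ((m:ℝ)+1) * ((2/t)^k * Real.exp (t * (2*(k:ℝ)+(2*n-1)+(m+1:ℕ))) * Real.exp (-lam n m k * t)) := by ring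
    _ ≤ ((2*(n:ℝ)+2)^(2*n+1) * (((m:ℝ)+1)^(2*n+2) * ((k:ℝ)+1)^(2*n+1))) * ((m:ℝ)+1) * ((Real.exp (2*n*t) * Real.exp ((c+t)^2/(16*t))) * (Real.exp (-(3*t))^m * Real.exp (-t)^k)) := by gcongr
    _ = _ := by ring

end
noncomputable section

def ser (n : ℕ) (w : ℕ × ℕ → ℝ) (t : ℝ) (y : ℝ × ℝ) : ℝ :=
  ∑' q : ℕ × ℕ, w q * Real.exp (-lam n q.1 q.2 * t) * ev (phi n q.1 q.2) y.1 y.2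

lemma lam_ge (n m k : ℕ) (hn : 1 ≤ n) : 1 ≤ lam n m k := by
  unfold lam
  have h1 : (1:ℝ) ≤ n := by exact_mod_cast hn
  have hm : (0:ℝ) ≤ m := by positivity
  have hi : (0:ℝ) ≤ k := by positivity
  have : (1:ℝ) ≤ ((k:ℝ)+n) := by linarith
  have : (1:ℝ) ≤ ((k:ℝ)+m+n+1) := by linarith
  nlinarith

lemma crude4 (n : ℕ) (hn : 1 ≤ n) (t : ℝ) (ht : 0 < t) {y : ℝ × ℝ} (hy : y ∈ Om) :
    Summable (fun q : ℕ × ℕ => 4 * AA n q.1 q.2 * Real.exp (-lam n q.1 q.2 * t) * |ev (phi n q.1 q.2) y.1 y.2|) := by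
  refine ((crude n hn t ht hy).mul_left 4).congr fun q => ?_
  ring

lemma term_le (n : ℕ) (w : ℕ × ℕ → ℝ) (hw : ∀ q, |w q| ≤ 4 * AA n q.1 q.2) (t : ℝ) (y : ℝ × ℝ) (q : ℕ × ℕ) :
   |w q * Real.exp (-lam n q.1 q.2 * t) * ev (phi n q.1 q.2) y.1 y.2| ≤ 
    4 * AA n q.1 q.2 * Real.exp (-lam n q.1 q.2 * t) * |ev (phi n q.1 q.2) y.1 y.2| := by
  rw [abs_mul, abs_mul, Real.abs_exp]
  gcongr
  exact hw q

lemma ser_summ (n : ℕ) (hn : 1 ≤ n) (w : ℕ × ℕ → ℝ) (hw : ∀ q, |w q| ≤ 4 * AA n q.1 q.2) (t : ℝ) (ht : 0 < t) {y : ℝ × ℝ} (hy : y ∈ Om) :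
    Summable (fun q : ℕ × ℕ => |w q * Real.exp (-lam n q.1 q.2 * t) * ev (phi n q.1 q.2) y.1 y.2|) :=
  Summable.of_nonneg_of_le (fun _ => abs_nonneg _) (term_le n w hw t y) (crude4 n hn t ht hy)

lemma ser_integrable (n : ℕ) (hn : 1 ≤ n) (w : ℕ × ℕ → ℝ) (hw : ∀ q, |w q| ≤ 4 * AA n q.1 q.2) (ε : ℝ) (hε : 0 < ε) {y : ℝ × ℝ} (hy : y ∈ Om) :
    IntegrableOn (fun t => ser n w t y) (Ioi ε) := by
  have hs := ser_summ n hn w hw ε hε hy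
  have key : ∀ t ∈ Ioi ε, ∀ q : ℕ × ℕ, |w q * Real.exp (-lam n q.1 q.2 * t) * ev (phi n q.1 q.2) y.1 y.2| ≤ 
     Real.exp (-1 * t) * (Real.exp ε * |w q * Real.exp (-lam n q.1 q.2 * ε) * ev (phi n q.1 q.2) y.1 y.2|) := by
    intro t ht q
    have ht : ε < t := ht
    have hl := lam_ge n q.1 q.2 hn
    have : Real.exp (-lam n q.1 q.2 * t) ≤ Real.exp (-1*t) * (Real.exp ε * Real.exp (-lam n q.1 q.2 * ε)) := by
      rw [← Real.exp_add, ← Real.exp_add, Real.exp_le_exp]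
      nlinarith [mul_nonneg (sub_nonneg.2 hl) (sub_nonneg.2 ht.le)]
    simp only [abs_mul, Real.abs_exp]
    calc _ ≤ |w q| * (Real.exp (-1*t) * (Real.exp ε * Real.exp (-lam n q.1 q.2 * ε))) * |ev (phi n q.1 q.2) y.1 y.2| := by gcongr
      _ = _ := by ring
  have hcont : ContinuousOn (fun t => ser n w t y) (Ioi ε) := by
    unfold ser
    refine continuousOn_tsum (fun q => ?_) (hs.mul_left (Real.exp ε)) ?_
    · fun_prop
    · intro q t ht
      refine (key t ht q).trans ?_
      have : Real.exp (-1*t) ≤ 1 := by rw [Real.exp_le_one_iff]; have : ε < t := ht; linarith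
      exact mul_le_of_le_one_left (by positivity) this
  refine Integrable.mono' (g := fun t => Real.exp (-1*t) * (∑' q : ℕ × ℕ, Real.exp ε * |w q * Real.exp (-lam n q.1 q.2 * ε) * ev (phi n q.1 q.2) y.1 y.2|)) ?_ (hcont.aestronglyMeasurable measurableSet_Ioi) ?_
  · exact (integrableOn_exp_mul_Ioi (by norm_num) ε).mul_const _
  · refine (ae_restrict_iff' measurableSet_Ioi).2 (Eventually.of_forall fun t ht => ?_)
    exact tsum_of_norm_bounded ((hs.mul_left (Real.exp ε)).hasSum.mul_left (Real.exp (-1*t))) (key t ht)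

lemma ser_integral (n : ℕ) (hn : 1 ≤ n) (w : ℕ × ℕ → ℝ) (hw : ∀ q, |w q| ≤ 4 * AA n q.1 q.2) (ε : ℝ) (hε : 0 < ε) {y : ℝ × ℝ} (hy : y ∈ Om) :
    ∫ t in Ioi ε, ser n w t y = ser n (fun q => w q / lam n q.1 q.2) ε y := by
  have hs := ser_summ n hn w hw ε hε hy
  have base : ∀ q : ℕ × ℕ, ∫ t in Ioi ε, Real.exp (-lam n q.1 q.2 * t) = Real.exp (-lam n q.1 q.2 * ε) / lam n q.1 q.2 := by
    intro q
    have hl := lam_ge n q.1 q.2 hn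
    rw [integral_exp_mul_Ioi (by linarith)]
    rw [neg_div_neg_eq]
  have bi : ∀ q : ℕ × ℕ, IntegrableOn (fun t => Real.exp (-lam n q.1 q.2 * t)) (Ioi ε) := by
    intro q
    have hl := lam_ge n q.1 q.2 hn
    exact integrableOn_exp_mul_Ioi (by linarith) ε
  have H := integral_tsum_of_summable_integral_norm (μ := volume.restrict (Ioi ε))
    (F := fun (q : ℕ × ℕ) t => w q * Real.exp (-lam n q.1 q.2 * t) * ev (phi n q.1 q.2) y.1 y.2)
    (fun q => ((bi q).const_mul _).mul_const _) ?_
  · unfold ser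
    rw [← H]
    refine tsum_congr fun q => ?_
    rw [integral_mul_const, integral_const_mul, base]; ring
  · refine Summable.of_nonneg_of_le (fun q => by positivity) (fun q => ?_) hs
    have hl := lam_ge n q.1 q.2 hn
    simp only [norm_mul, Real.norm_eq_abs, Real.abs_exp, abs_mul]
    rw [integral_mul_const, integral_const_mul, base]
    have : Real.exp (-lam n q.1 q.2 * ε) / lam n q.1 q.2 ≤ Real.exp (-lam n q.1 q.2 * ε) := div_le_self (by positivity) hl
    gcongr

end
noncomputable section

def wz (n : ℕ) (z : ℝ) (q : ℕ × ℕ) : ℝ := 4 * AA n q.1 q.2 * z^(q.1+2*q.2) * yy (q.2+n) (q.2+q.1+n+1) z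

def vz (n : ℕ) (z t : ℝ) (y : ℝ × ℝ) : ℝ := ∑' q : ℕ × ℕ, kap n q.1 q.2 * z^(q.1+2*q.2) * EE n t y.1 y.2 q.1 q.2

lemma wz_le (n : ℕ) (hn : 1 ≤ n) (z : ℝ) (h0 : 0 ≤ z) (h1 : z < 1) (q : ℕ × ℕ) : |wz n z q| ≤ 4 * AA n q.1 q.2 := by
  have hA := AA_nonneg n q.1 q.2
  have hy := yy_nonneg (q.2+n) (q.2+q.1+n+1) z
  have hy1 := yy_le_one (q.2+n) (q.2+q.1+n+1) (by omega) (by omega) z h0 h1.le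
  have hp : z^(q.1+2*q.2) ≤ 1 := pow_le_one₀ h0 h1.le
  unfold wz
  rw [abs_of_nonneg (by positivity)]
  calc _ ≤ 4 * AA n q.1 q.2 * 1 * 1 := by gcongr
    _ = _ := by ring

lemma div_lam_le (n : ℕ) (hn : 1 ≤ n) (w : ℕ × ℕ → ℝ) (hw : ∀ q, |w q| ≤ 4 * AA n q.1 q.2) (q : ℕ × ℕ) : |w q / lam n q.1 q.2| ≤ 4 * AA n q.1 q.2 := by
  have hl := lam_ge n q.1 q.2 hn
  rw [abs_div, abs_of_nonneg (a := lam n q.1 q.2) (by linarith)]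
  exact (div_le_self (abs_nonneg _) hl).trans (hw q)

lemma z2j (z : ℝ) (m k j : ℕ) : z^(m+2*(k+j)) = z^(m+2*k) * (z^2)^j := by
  rw [← pow_mul, ← pow_add]; congr 1; ring

lemma gz_le (n : ℕ) (z : ℝ) (h0 : 0 ≤ z) (h1 : z < 1) (q : ℕ × ℕ) : |4 * AA n q.1 q.2 * z^(q.1+2*q.2)| ≤ 4 * AA n q.1 q.2 := by
  have hA := AA_nonneg n q.1 q.2
  have hp : z^(q.1+2*q.2) ≤ 1 := pow_le_one₀ h0 h1.le
  rw [abs_of_nonneg (by positivity)]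
  exact mul_le_of_le_one_right (by positivity) hp

lemma vz_eq (n : ℕ) (hn : 1 ≤ n) (z : ℝ) (h0 : 0 ≤ z) (h1 : z < 1) (t : ℝ) (ht : 0 < t) {y : ℝ × ℝ} (hy : y ∈ Om) :
    vz n z t y = ser n (fun q => wz n z q / lam n q.1 q.2) t y := by
  have R := reorg n t y.1 y.2 (z^2) (sq_nonneg z) (by nlinarith) (fun q => kap n q.1 q.2 * z^(q.1+2*q.2))
    (fun q => (4 * AA n q.1 q.2 * z^(q.1+2*q.2)) / lam n q.1 q.2) (fun q => yy (q.2+n) (q.2+q.1+n+1) z)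
    (fun q j => dd (q.2+n) (q.2+q.1+n+1) j * (z^2)^j) ?_ ?_ ?_ ?_
  · unfold vz ser
    rw [R]
    refine tsum_congr fun q => ?_
    unfold wz; ring
  · intro m k j
    simp only
    rw [z2j]
    linear_combination (z^(m+2*k) * (z^2)^j) * coef1 n m k j hn
  · intro q j
    rw [abs_of_nonneg (mul_nonneg (dd_nonneg _ _ _) (by positivity))]
    exact mul_le_of_le_one_left (by positivity) (dd_le_one _ _ _ (by omega) (by omega))
  · exact ser_summ n hn _ (div_lam_le n hn _ (gz_le n z h0 h1)) t ht hy
  · intro q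
    exact yy_hasSum _ _ (by omega) (by omega) z h0 h1.le

def bz (n : ℕ) (z : ℝ) (q : ℕ × ℕ) : ℝ := (1-z^2) * (kap n q.1 q.2 * (4 * ((q.2:ℝ) + (n:ℝ)) * (q.2+q.1+n+1)) * z^(q.1+2*q.2))

lemma fz_eq (n : ℕ) (hn : 1 ≤ n) (z : ℝ) (h0 : 0 ≤ z) (h1 : z < 1) (t : ℝ) (ht : 0 < t) {y : ℝ × ℝ} (hy : y ∈ Om) :
    ∑' q, bz n z q * EE n t y.1 y.2 q.1 q.2 = ser n (wz n z) t y := by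
  have R := reorg n t y.1 y.2 (z^2) (sq_nonneg z) (by nlinarith) (bz n z)
    (fun q => (4 * AA n q.1 q.2 * z^(q.1+2*q.2))) (fun q => yy (q.2+n) (q.2+q.1+n+1) z)
    (fun q j => (1-z^2) * TT (q.2+n) (q.2+q.1+n+1) j * (z^2)^j) ?_ ?_ ?_ ?_
  · unfold ser
    rw [R]
    refine tsum_congr fun q => ?_
    unfold wz; ring
  · intro m k j
    simp only [bz]
    rw [z2j]
    linear_combination ((1-z^2) * z^(m+2*k) * (z^2)^j) * coef2 n m k j hn
  · intro q j
    have hz : 0 ≤ 1-z^2 := by nlinarith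
    have := TT_nonneg (q.2+n) (q.2+q.1+n+1) j
    have h3 := TT_le_one (q.2+n) (q.2+q.1+n+1) j
    rw [abs_of_nonneg (by positivity)]
    exact mul_le_of_le_one_left (by positivity) (mul_le_one₀ (by nlinarith) this h3)
  · exact ser_summ n hn _ (gz_le n z h0 h1) t ht hy
  · intro q
    exact yy_hasSum' _ _ (by omega) (by omega) z h0 h1

lemma bz_eq (n : ℕ) (hn : 1 ≤ n) (z : ℝ) (q : ℕ × ℕ) : bz n z q = 4*n*(n+1)*(1-z^2) * (kap (n+1) q.1 q.2 * z^(q.1+2*q.2)) := by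
  unfold bz
  linear_combination 4 * (1-z^2) * z^(q.1+2*q.2) * kap_up n q.1 q.2 hn

lemma gen_tsum (n : ℕ) (z : ℝ) (h0 : 0 ≤ z) (h1 : z < 1) {y : ℝ × ℝ} (hy : y ∈ Om) :
    HasSum (fun q : ℕ × ℕ => kap n q.1 q.2 * z^(q.1+2*q.2) * (y.2^q.2 * vv q.1 y.1 y.2)) (((1 - 2*z*y.1 + z^2*y.2)^(n+1))⁻¹) := by
  refine (gen_fun n z y.1 y.2 h0 h1 hy).congr_fun fun q => ?_
  unfold ww; ring

lemma kz_summ (n : ℕ) (z : ℝ) (h0 : 0 ≤ z) (h1 : z < 1) :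
    Summable (fun q : ℕ × ℕ => |kap n q.1 q.2 * z^(q.1+2*q.2)| * ((q.1:ℝ)+1)) := by
  refine (kap_summable n 1 z h0 h1).congr fun q => ?_
  rw [abs_of_nonneg (mul_nonneg (kap_nonneg _ _ _) (by positivity))]; ring

lemma fz_nonneg (n : ℕ) (hn : 1 ≤ n) (z : ℝ) (h0 : 0 ≤ z) (h1 : z < 1) (t : ℝ) (ht : 0 < t) {y : ℝ × ℝ} (hy : y ∈ Om) :
    0 ≤ ser n (wz n z) t y := by
  rw [← fz_eq n hn z h0 h1 t ht hy]
  have hz : 0 ≤ 1-z^2 := by nlinarith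
  refine E_pos n hn (bz n z) ?_ ?_ t ht.le y hy
  · refine ((kz_summ (n+1) z h0 h1).mul_left |4*n*(n+1)*(1-z^2)|).congr fun q => ?_
    rw [bz_eq n hn, ← mul_assoc, ← abs_mul]
  · intro y hy
    have := ((gen_tsum (n+1) z h0 h1 hy).mul_left (4*n*(n+1)*(1-z^2)))
    have h2 : HasSum (fun q => bz n z q * (y.2^q.2 * vv q.1 y.1 y.2)) (4*n*(n+1)*(1-z^2) * ((1 - 2*z*y.1 + z^2*y.2)^(n+1+1))⁻¹) := by
      refine this.congr_fun fun q => ?_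
      rw [bz_eq n hn]; ring
    rw [h2.tsum_eq]
    have := gen_D_pos z y.1 y.2 h0 h1 hy
    positivity

lemma D_mono (z z' : ℝ) (h0 : 0 ≤ z') (hzz : z' ≤ z) (h1 : z < 1) {y : ℝ × ℝ} (hy : y ∈ Om) :
    (1+z')^2 * (1 - 2*z*y.1 + z^2*y.2) ≤ (1+z)^2 * (1 - 2*z'*y.1 + z'^2*y.2) := by
  have a : y.1^2 ≤ y.2 := hy.1
  have b : y.2 ≤ 1 := hy.2
  have hx : -1 ≤ y.1 := by nlinarith
  have hk : 0 ≤ 2+z+z'+2*y.1*(1-z*z')-y.2*(z+z'+2*z*z') := by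
    have h2 : 0 ≤ 1 - z*z' := by nlinarith
    nlinarith [mul_nonneg (show 0 ≤ y.1+1 by linarith) h2, mul_nonneg (sub_nonneg.2 b) (show 0 ≤ z+z'+2*z*z' by nlinarith [mul_nonneg h0 (h0.trans hzz)])]
  nlinarith [mul_nonneg (sub_nonneg.2 hzz) hk]

lemma D_mono_inv (n : ℕ) (z z' : ℝ) (h0 : 0 ≤ z') (hzz : z' ≤ z) (h1 : z < 1) {y : ℝ × ℝ} (hy : y ∈ Om) :
    (1+z')^(2*n+2) * ((1 - 2*z'*y.1 + z'^2*y.2)^(n+1))⁻¹ ≤ (1+z)^(2*n+2) * ((1 - 2*z*y.1 + z^2*y.2)^(n+1))⁻¹ := by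
  have p1 := gen_D_pos z y.1 y.2 (h0.trans hzz) h1 hy
  have p2 := gen_D_pos z' y.1 y.2 h0 (by linarith) hy
  have h := D_mono z z' h0 hzz h1 hy
  rw [← div_eq_mul_inv, ← div_eq_mul_inv, div_le_div_iff₀ (by positivity) (by positivity),
   show 2*n+2 = 2*(n+1) by ring, pow_mul, pow_mul, ← mul_pow, ← mul_pow]
  gcongr

lemma vz_summ (n : ℕ) (hn : 1 ≤ n) (z : ℝ) (h0 : 0 ≤ z) (h1 : z < 1) (t : ℝ) (ht : 0 ≤ t) {y : ℝ × ℝ} (hy : y ∈ Om) :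
    Summable (fun q : ℕ × ℕ => kap n q.1 q.2 * z^(q.1+2*q.2) * EE n t y.1 y.2 q.1 q.2) := by
  refine Summable.of_norm_bounded (kz_summ n z h0 h1) fun q => ?_
  rw [norm_mul, Real.norm_eq_abs, Real.norm_eq_abs]
  gcongr
  exact EE_bound n hn t ht hy _ _

lemma vz_mono (n : ℕ) (hn : 1 ≤ n) (z z' : ℝ) (h0 : 0 ≤ z') (hzz : z' ≤ z) (h1 : z < 1) (t : ℝ) (ht : 0 ≤ t) {y : ℝ × ℝ} (hy : y ∈ Om) :
    (1+z')^(2*n+2) * vz n z' t y ≤ (1+z)^(2*n+2) * vz n z t y := by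
  have hz := h0.trans hzz
  have h1' : z' < 1 := by linarith
  have P := E_pos n hn (fun q => (1+z)^(2*n+2) * (kap n q.1 q.2 * z^(q.1+2*q.2)) - (1+z')^(2*n+2) * (kap n q.1 q.2 * z'^(q.1+2*q.2))) ?_ ?_ t ht y hy
  · have H := ((vz_summ n hn z hz h1 t ht hy).hasSum.mul_left ((1+z)^(2*n+2))).sub ((vz_summ n hn z' h0 h1' t ht hy).hasSum.mul_left ((1+z')^(2*n+2)))
    have H2 : HasSum (fun q : ℕ × ℕ => ((1+z)^(2*n+2) * (kap n q.1 q.2 * z^(q.1+2*q.2)) - (1+z')^(2*n+2) * (kap n q.1 q.2 * z'^(q.1+2*q.2))) * EE n t y.1 y.2 q.1 q.2) ((1+z)^(2*n+2) * vz n z t y - (1+z')^(2*n+2) * vz n z' t y) := by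
      refine H.congr_fun fun q => ?_
      ring
    rw [H2.tsum_eq] at P
    linarith
  · have A := ((kz_summ n z hz h1).mul_left ((1+z)^(2*n+2))).add ((kz_summ n z' h0 h1').mul_left ((1+z')^(2*n+2)))
    refine Summable.of_nonneg_of_le (fun q => by positivity) (fun q => ?_) A
    have := abs_sub ((1+z)^(2*n+2) * (kap n q.1 q.2 * z^(q.1+2*q.2))) ((1+z')^(2*n+2) * (kap n q.1 q.2 * z'^(q.1+2*q.2)))
    have e1 : |(1+z)^(2*n+2) * (kap n q.1 q.2 * z^(q.1+2*q.2))| = (1+z)^(2*n+2) * |(kap n q.1 q.2 * z^(q.1+2*q.2))| := by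
      rw [abs_mul, abs_of_nonneg (by positivity)]
    have e2 : |(1+z')^(2*n+2) * (kap n q.1 q.2 * z'^(q.1+2*q.2))| = (1+z')^(2*n+2) * |(kap n q.1 q.2 * z'^(q.1+2*q.2))| := by
      rw [abs_mul, abs_of_nonneg (by positivity)]
    rw [e1, e2] at this
    calc _ ≤ _ := mul_le_mul_of_nonneg_right this (by positivity)
      _ = _ := by ring
  · intro y hy
    have H := ((gen_tsum n z hz h1 hy).mul_left ((1+z)^(2*n+2))).sub ((gen_tsum n z' h0 h1' hy).mul_left ((1+z')^(2*n+2)))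
    have H2 : HasSum (fun q : ℕ × ℕ => ((1+z)^(2*n+2) * (kap n q.1 q.2 * z^(q.1+2*q.2)) - (1+z')^(2*n+2) * (kap n q.1 q.2 * z'^(q.1+2*q.2))) * (y.2^q.2 * vv q.1 y.1 y.2)) ((1+z)^(2*n+2) * ((1 - 2*z*y.1 + z^2*y.2)^(n+1))⁻¹ - (1+z')^(2*n+2) * ((1 - 2*z'*y.1 + z'^2*y.2)^(n+1))⁻¹) := by
      refine H.congr_fun fun q => ?_
      ring
    rw [H2.tsum_eq]
    have := D_mono_inv n z z' h0 hzz h1 hy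
    linarith

lemma vz_tendsto0 (n : ℕ) (hn : 1 ≤ n) (z : ℝ) (h0 : 0 ≤ z) (h1 : z < 1) {y : ℝ × ℝ} (hy : y ∈ Om) :
    Tendsto (fun t => vz n z t y) (𝓝[>] 0) (𝓝 (((1 - 2*z*y.1 + z^2*y.2)^(n+1))⁻¹)) := by
  rw [← (gen_tsum n z h0 h1 hy).tsum_eq]
  unfold vz
  refine tendsto_tsum_of_dominated_convergence (kz_summ n z h0 h1) ?_ ?_
  · intro q
    refine Tendsto.const_mul _ ?_
    rw [← EE_zero n]
    have : ContinuousAt (fun t => EE n t y.1 y.2 q.1 q.2) 0 := by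
      unfold EE; fun_prop
    have h := this.tendsto
    have e : EE n 0 y.1 y.2 q.1 q.2 = ∑ k ∈ Finset.range (q.2+1), cc (2*n-1) (q.1+1) q.2 k * ev (phi n q.1 k) y.1 y.2 := by
      simp [EE]
    rw [e] at h
    exact h.mono_left nhdsWithin_le_nhds
  · filter_upwards [self_mem_nhdsWithin] with t ht q
    rw [norm_mul, Real.norm_eq_abs, Real.norm_eq_abs]
    gcongr
    exact EE_bound n hn t (le_of_lt ht) hy _ _

lemma wz_tendsto (n : ℕ) (hn : 1 ≤ n) (q : ℕ × ℕ) : Tendsto (fun z => wz n z q) (𝓝[<] 1) (𝓝 (4 * AA n q.1 q.2)) := by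
  unfold wz
  have h1 := yy_tendsto (q.2+n) (q.2+q.1+n+1) (by omega) (by omega)
  have h2 : Tendsto (fun z : ℝ => 4 * AA n q.1 q.2 * z^(q.1+2*q.2)) (𝓝[<] 1) (𝓝 (4 * AA n q.1 q.2 * 1^(q.1+2*q.2))) := by
    have : ContinuousAt (fun z : ℝ => 4 * AA n q.1 q.2 * z^(q.1+2*q.2)) 1 := by fun_prop
    exact this.tendsto.mono_left nhdsWithin_le_nhds
  simpa using h2.mul h1

lemma ser_tendsto (n : ℕ) (hn : 1 ≤ n) (w : ℝ → ℕ × ℕ → ℝ) (w1 : ℕ × ℕ → ℝ) 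
    (hw : ∀ z, 0 ≤ z → z < 1 → ∀ q, |w z q| ≤ 4 * AA n q.1 q.2)
    (hl : ∀ q, Tendsto (fun z => w z q) (𝓝[<] 1) (𝓝 (w1 q))) (t : ℝ) (ht : 0 < t) {y : ℝ × ℝ} (hy : y ∈ Om) :
    Tendsto (fun z => ser n (w z) t y) (𝓝[<] 1) (𝓝 (ser n w1 t y)) := by
  unfold ser
  refine tendsto_tsum_of_dominated_convergence (crude4 n hn t ht hy) ?_ ?_
  · intro q
    exact ((hl q).mul_const _).mul_const _
  · have : Ioo (0:ℝ) 1 ∈ 𝓝[<] (1:ℝ) := Ioo_mem_nhdsLT (by norm_num)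
    filter_upwards [this] with z hz q
    exact term_le n (w z) (hw z hz.1.le hz.2) t y q

def w1 (n : ℕ) (q : ℕ × ℕ) : ℝ := 4 * AA n q.1 q.2

lemma w1_le (n : ℕ) (q : ℕ × ℕ) : |w1 n q| ≤ 4 * AA n q.1 q.2 := by
  have := AA_nonneg n q.1 q.2
  unfold w1; rw [abs_of_nonneg (by positivity)]

lemma f_nonneg (n : ℕ) (hn : 1 ≤ n) (t : ℝ) (ht : 0 < t) {y : ℝ × ℝ} (hy : y ∈ Om) : 0 ≤ ser n (w1 n) t y := by
  have h := ser_tendsto n hn (wz n) (w1 n) (fun z a b => wz_le n hn z a b) (wz_tendsto n hn) t ht hy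
  refine ge_of_tendsto h ?_
  have : Ioo (0:ℝ) 1 ∈ 𝓝[<] (1:ℝ) := Ioo_mem_nhdsLT (by norm_num)
  filter_upwards [this] with z hz
  exact fz_nonneg n hn z hz.1.le hz.2 t ht hy

lemma vz_to_F (n : ℕ) (hn : 1 ≤ n) (t : ℝ) (ht : 0 < t) {y : ℝ × ℝ} (hy : y ∈ Om) : 
    Tendsto (fun z => vz n z t y) (𝓝[<] 1) (𝓝 (ser n (fun q => w1 n q / lam n q.1 q.2) t y)) := by
  have h := ser_tendsto n hn (fun z q => wz n z q / lam n q.1 q.2) (fun q => w1 n q / lam n q.1 q.2) 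
    (fun z a b => div_lam_le n hn _ (wz_le n hn z a b)) (fun q => (wz_tendsto n hn q).div_const _) t ht hy
  refine h.congr' ?_
  have : Ioo (0:ℝ) 1 ∈ 𝓝[<] (1:ℝ) := Ioo_mem_nhdsLT (by norm_num)
  filter_upwards [this] with z hz
  exact (vz_eq n hn z hz.1.le hz.2 t ht hy).symm

lemma vz_anti (n : ℕ) (hn : 1 ≤ n) (z : ℝ) (h0 : 0 ≤ z) (h1 : z < 1) (s t : ℝ) (hs : 0 < s) (hst : s ≤ t) {y : ℝ × ℝ} (hy : y ∈ Om) :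
    vz n z t y ≤ vz n z s y := by
  have ht := hs.trans_le hst
  rw [vz_eq n hn z h0 h1 t ht hy, vz_eq n hn z h0 h1 s hs hy, ← ser_integral n hn _ (wz_le n hn z h0 h1) t ht hy,
    ← ser_integral n hn _ (wz_le n hn z h0 h1) s hs hy]
  refine setIntegral_mono_set (ser_integrable n hn _ (wz_le n hn z h0 h1) s hs hy) ?_ (Ioi_subset_Ioi hst).eventuallyLE
  refine (ae_restrict_iff' measurableSet_Ioi).2 (Eventually.of_forall fun t ht => ?_)
  exact fz_nonneg n hn z h0 h1 t (hs.trans ht) hy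

lemma main_int (n : ℕ) (hn : 1 ≤ n) {y : ℝ × ℝ} (hy : y ∈ Om) (hD : 0 < 1 - 2*y.1 + y.2) :
    ∫ t in Ioi (0:ℝ), ser n (w1 n) t y = ((1 - 2*y.1 + y.2)^(n+1))⁻¹ := by
  set L := ((1 - 2*y.1 + y.2)^(n+1))⁻¹ with hL
  have I01 : Ioo (0:ℝ) 1 ∈ 𝓝[<] (1:ℝ) := Ioo_mem_nhdsLT (by norm_num)
  have hDt : Tendsto (fun z : ℝ => ((1 - 2*z*y.1 + z^2*y.2)^(n+1))⁻¹) (𝓝[<] 1) (𝓝 L) := by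
    have : ContinuousAt (fun z : ℝ => ((1 - 2*z*y.1 + z^2*y.2)^(n+1))⁻¹) 1 := by
      refine ContinuousAt.inv₀ (by fun_prop) ?_
      simp only [mul_one, one_pow, one_mul]
      positivity
    have h := this.tendsto
    simp only [mul_one, one_pow, one_mul] at h
    exact h.mono_left nhdsWithin_le_nhds
  set F := fun ε => ser n (fun q => w1 n q / lam n q.1 q.2) ε y with hF
  have upper : ∀ ε, 0 < ε → F ε ≤ L := by
    intro ε hε
    refine le_of_tendsto_of_tendsto (vz_to_F n hn ε hε hy) hDt ?_
    filter_upwards [I01] with z hz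
    refine ge_of_tendsto (vz_tendsto0 n hn z hz.1.le hz.2 hy) ?_
    filter_upwards [Ioo_mem_nhdsGT hε] with s hs
    exact vz_anti n hn z hz.1.le hz.2 s ε hs.1 hs.2.le hy
  have lower : ∀ ε, 0 < ε → ∀ z ∈ Ioo (0:ℝ) 1, (1+z)^(2*n+2) * vz n z ε y ≤ 2^(2*n+2) * F ε := by
    intro ε hε z hz
    have h1 : Tendsto (fun s : ℝ => (1+s)^(2*n+2) * vz n s ε y) (𝓝[<] 1) (𝓝 ((1+1)^(2*n+2) * F ε)) := by
      refine Tendsto.mul ?_ (vz_to_F n hn ε hε hy)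
      have : ContinuousAt (fun s : ℝ => (1+s)^(2*n+2)) 1 := by fun_prop
      exact this.tendsto.mono_left nhdsWithin_le_nhds
    rw [show (1:ℝ)+1 = 2 by norm_num] at h1
    refine ge_of_tendsto h1 ?_
    filter_upwards [Ioo_mem_nhdsLT hz.2] with s hs
    exact vz_mono n hn s z hz.1.le hs.1.le hs.2 ε hε.le hy
  have hFt : Tendsto F (𝓝[>] 0) (𝓝 L) := by
    rw [tendsto_order]
    constructor
    · intro a ha
      have h1 : Tendsto (fun z : ℝ => (1+z)^(2*n+2) * ((1 - 2*z*y.1 + z^2*y.2)^(n+1))⁻¹) (𝓝[<] 1) (𝓝 ((1+1)^(2*n+2) * L)) := by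
        refine Tendsto.mul ?_ hDt
        have : ContinuousAt (fun s : ℝ => (1+s)^(2*n+2)) 1 := by fun_prop
        exact this.tendsto.mono_left nhdsWithin_le_nhds
      rw [show (1:ℝ)+1 = 2 by norm_num] at h1
      have h2 : (2:ℝ)^(2*n+2) * a < 2^(2*n+2) * L := by gcongr
      obtain ⟨z, hz1, hz2⟩ := ((h1.eventually (lt_mem_nhds h2)).and I01).exists
      have h3 := (vz_tendsto0 n hn z hz2.1.le hz2.2 hy).const_mul ((1+z)^(2*n+2))
      filter_upwards [h3.eventually (lt_mem_nhds hz1), self_mem_nhdsWithin] with ε hε hε0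
      have h4 := lower ε hε0 z hz2
      have h5 := hε.trans_le h4
      exact lt_of_mul_lt_mul_left h5 (by positivity)
    · intro a ha
      filter_upwards [self_mem_nhdsWithin] with ε hε
      exact (upper ε hε).trans_lt ha
  have hseq : Tendsto (fun j : ℕ => 1 / ((j:ℝ)+1)) atTop (𝓝 0) := tendsto_one_div_add_atTop_nhds_zero_nat
  have hpos : ∀ j : ℕ, 0 < 1 / ((j:ℝ)+1) := fun j => by positivity
  refine (aecover_Ioi_of_Ioi (μ := volume) hseq).integral_eq_of_tendsto_of_nonneg_ae L ?_ ?_ ?_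
  · exact (ae_restrict_iff' measurableSet_Ioi).2 (Eventually.of_forall fun t ht => f_nonneg n hn t ht hy)
  · intro j
    exact (ser_integrable n hn _ (w1_le n) _ (hpos j) hy).mono_measure Measure.restrict_le_self
  · have h := hFt.comp (tendsto_nhdsWithin_of_tendsto_nhds_of_eventually_within _ hseq (Eventually.of_forall hpos))
    refine h.congr fun j => ?_
    simp only [Function.comp, hF]
    rw [← ser_integral n hn _ (w1_le n) _ (hpos j) hy, Measure.restrict_restrict measurableSet_Ioi,
      inter_eq_left.2 (Ioi_subset_Ioi (hpos j).le)]

end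

noncomputable section

lemma vv_trig (r η : ℝ) (hs : Real.sin η ≠ 0) (m : ℕ) :
    vv m (Real.cos r * Real.cos η) (Real.cos r ^ 2) = Real.cos r ^ m * (Real.sin ((m+1) * η) / Real.sin η) := by
  induction m using Nat.twoStepInduction with
  | zero => rw [vv_zero]; simp [hs]
  | one =>
    rw [vv_one]
    have : ((1:ℕ):ℝ) + 1 = 2 := by norm_num
    rw [this, Real.sin_two_mul]
    field_simp
  | more m h1 h2 =>
    rw [vv_rec, h1, h2]
    have e : Real.sin ((((m+2 : ℕ):ℝ)+1) * η) = 2 * Real.cos η * Real.sin ((((m+1 : ℕ):ℝ)+1) * η) - Real.sin (((m:ℝ)+1) * η) := by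
      have a : (((m+2 : ℕ):ℝ)+1) * η = (((m+1 : ℕ):ℝ)+1) * η + η := by push_cast; ring
      have b : ((m:ℝ)+1) * η = (((m+1 : ℕ):ℝ)+1) * η - η := by push_cast; ring
      rw [a, b, Real.sin_add, Real.sin_sub]; ring
    rw [e]
    field_simp
    ring

lemma coef_eq (n m k : ℕ) (hn : 1 ≤ n) :
    Real.Gamma (2 * n) * (Nat.choose (k + m + 2 * n) (2 * n - 1) : ℝ) = ((k+m+2*n).factorial : ℝ) / (k+m+1).factorial := by
  obtain ⟨N, rfl⟩ : ∃ N, n = N + 1 := ⟨n-1, by omega⟩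
  have e : (2 * ((N+1 : ℕ):ℝ)) = ((2*N+1 : ℕ) : ℝ) + 1 := by push_cast; ring
  rw [e, Real.Gamma_nat_eq_factorial]
  have h := Nat.choose_mul_factorial_mul_factorial (n := k+m+2*(N+1)) (k := 2*(N+1)-1) (by omega)
  rw [show k+m+2*(N+1) - (2*(N+1)-1) = k+m+1 by omega, show 2*(N+1)-1 = 2*N+1 by omega] at h
  rw [show 2*(N+1)-1 = 2*N+1 by omega, eq_div_iff (by positivity), ← h]
  push_cast; ring

end

/-- the Green function of the conformal sub-Laplacian `-L + 4n(n+1)` on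
`S^{4n+3}`. -/
theorem stmt_8 (n : ℕ) (hn : 1 ≤ n) (J : ℕ → ℕ → ℕ → ℝ → ℝ) (hJ : IsJacobi J)
    (r η : ℝ) (hr : r ∈ Set.Ico 0 (π / 2)) (hη : η ∈ Set.Ioo 0 π) :
    (∫ t in Set.Ioi (0 : ℝ), pKernel n J t r η * Real.exp (-(4 * n * (n + 1)) * t)) =
      Real.Gamma n * Real.Gamma (n + 1) /
        (8 * π ^ (2 * n + 2) *
          (1 - 2 * Real.cos r * Real.cos η + Real.cos r ^ 2) ^ (n + 1)) := by
  have hs : 0 < Real.sin η := Real.sin_pos_of_pos_of_lt_pi hη.1 hη.2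
  have hy : ((Real.cos r * Real.cos η, Real.cos r ^ 2) : ℝ × ℝ) ∈ Om := by
    constructor
    · show (Real.cos r * Real.cos η)^2 ≤ Real.cos r ^ 2
      rw [mul_pow]
      exact mul_le_of_le_one_right (sq_nonneg _) (Real.cos_sq_le_one η)
    · exact Real.cos_sq_le_one r
  have hD : 0 < 1 - 2 * (Real.cos r * Real.cos η) + Real.cos r ^ 2 := by
    nlinarith [Real.sin_sq_add_cos_sq η, sq_nonneg (Real.cos r - Real.cos η), pow_pos hs 2]
  have hmain := main_int n hn hy hD
  have key : ∀ t : ℝ, pKernel n J t r η * Real.exp (-(4 * n * (n + 1)) * t) =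
      ((n.factorial * (n-1).factorial : ℝ) / (8 * π ^ (2 * n + 2))) *
        ser n (w1 n) t (Real.cos r * Real.cos η, Real.cos r ^ 2) := by
    intro t
    unfold pKernel ser
    rw [← tsum_mul_right, ← tsum_mul_left]
    refine tsum_congr fun q => ?_
    obtain ⟨m, k⟩ := q
    simp only [pTerm, w1, AA]
    rw [ev_phi, vv_trig r η hs.ne', Real.cos_two_mul, J_eq hJ, vertFactor, if_neg hη.1.ne']
    rw [← coef_eq n m k hn]
    have he : Real.exp (-lam n m k * t) = Real.exp (-(4 * ((k : ℝ) * (k + 2 * n + m + 1) + n * m)) * t) * Real.exp (-(4 * n * (n + 1)) * t) := by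
      rw [← Real.exp_add]; congr 1; unfold lam; ring
    rw [he]
    have h1 : ((n.factorial : ℕ) : ℝ) ≠ 0 := by positivity
    have h2 : (((n-1).factorial : ℕ) : ℝ) ≠ 0 := by positivity
    have h3 : π ≠ 0 := Real.pi_ne_zero
    field_simp
    ring
  simp_rw [key]
  rw [integral_const_mul, hmain]
  have g1 : Real.Gamma n = ((n-1).factorial : ℝ) := by
    obtain ⟨N, rfl⟩ : ∃ N, n = N + 1 := ⟨n-1, by omega⟩
    rw [Nat.cast_add_one, Real.Gamma_nat_eq_factorial]; simp
  rw [g1, Real.Gamma_nat_eq_factorial, ← mul_assoc 2 (Real.cos r)]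
  rw [← mul_assoc] at hD
  have h3 : π ≠ 0 := Real.pi_ne_zero
  have h4 := hD.ne'
  field_simp
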